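/- Let p be an odd prime, p > 3. If PSL(2, p) acts faithfully by diffeomorphisms on Euclidean space R^n, then n ≥ p − 1 when p ≡ 3 (mod 4), and n ≥ (p + 1)/2 when p ≡ 1 (mod 4). These bounds are sharp: they are realized by faithful linear actions of PSL(2, p) on R^{p−1} and R^{(p+1)/2} respectively. -/

import Mathlib

/-!
Let `PSL₂(p)` act faithfully on `ℝⁿ` by diffeomorphisms and let `u` be a unipotent element, of
order `p`. By Smith theory the fixed set of `u` is nonempty and connected: otherwise `ℝⁿ` would have
equivariant labellings by the vertices of a finite-dimensional complex, through which cochains of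
every degree would evaluate to `1` on chains of arbitrarily small simplices. Hence the multiplicity
of `exp (2πia/p)` as an eigenvalue of the derivative of `u` is the same at all fixed points. As the
split torus permutes the fixed points and conjugates `u` to its powers `u ^ (s ^ 2)`, the
multiplicity is unchanged when `a` is multiplied by a nonzero square. It is also unchanged when `a`
is replaced by `-a`, the derivative being real, and it is nonzero for some `a ≠ 0`. If
`p ≡ 3 (mod 4)`, then `-1` is not a square, so all `p - 1` nontrivial eigenvalues occur.

If `p ≡ 1 (mod 4)`, this only yields `n ≥ (p - 1) / 2`. In the case of equality the fixed point of
`u` is isolated, hence unique, hence fixed by the torus. There a generator of the torus permutes the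
`(p - 1) / 2` eigenlines of `u` cyclically, so that its derivative has determinant `-1`, this number
being even. But the group is generated by squares, and so preserves the orientation.

The bounds are attained by the odd part of the Weil representation, of complex dimension
`(p - 1) / 2`, when `p ≡ 3 (mod 4)`, and by half of the real principal series of the quadratic
character when `p ≡ 1 (mod 4)`.
-/

open Matrix

namespace PSLAction

/-! ### Ordered chains -/

section Chains

variable {R : Type*} [CommRing R] {X Y : Type*} {k : ℕ}

/-- Chains of the augmented complex of ordered simplices on a set `X`. The degree `k` is the number
of vertices, so degree `0` is the augmentation. -/
abbrev Chain (R : Type*) [CommRing R] (X : Type*) (k : ℕ) := (Fin k → X) →₀ R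

/-- Cochains dual to `Chain R X k`. -/
abbrev Cochain (R : Type*) (X : Type*) (k : ℕ) := (Fin k → X) → R

/-- The evaluation of a cochain on chains. -/
noncomputable abbrev pairing (a : Cochain R X k) : Chain R X k →ₗ[R] R :=
  Finsupp.linearCombination R a

/-- The alternating face map of the augmented complex of ordered simplices. -/
noncomputable def boundary (R : Type*) [CommRing R] (X : Type*) (k : ℕ) :
    Chain R X (k + 1) →ₗ[R] Chain R X k :=
  Finsupp.linearCombination R fun v ↦
    ∑ i : Fin (k + 1), (-1 : R) ^ (i : ℕ) • Finsupp.single (v ∘ i.succAbove) 1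

/-- The coboundary, dual to `boundary`. -/
def coboundary (a : Cochain R X k) : Cochain R X (k + 1) := fun v ↦
  ∑ i : Fin (k + 1), (-1 : R) ^ (i : ℕ) * a (v ∘ i.succAbove)

/-- The cone over a chain with a given apex. -/
noncomputable def cone (R : Type*) [CommRing R] (x : X) (k : ℕ) :
    Chain R X k →ₗ[R] Chain R X (k + 1) :=
  Finsupp.lmapDomain R R fun v : Fin k → X ↦ (Fin.cons x v : Fin (k + 1) → X)

/-- The map of chains induced by a map of vertices. -/
noncomputable def chainMap (R : Type*) [CommRing R] (f : X → Y) (k : ℕ) :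
    Chain R X k →ₗ[R] Chain R Y k :=
  Finsupp.lmapDomain R R (f ∘ ·)

lemma boundary_single (v : Fin (k + 1) → X) : boundary R X k (Finsupp.single v 1) =
    ∑ i : Fin (k + 1), (-1 : R) ^ (i : ℕ) • Finsupp.single (v ∘ i.succAbove) 1 := by
  simp [boundary]

lemma cone_single (x : X) (v : Fin k → X) :
    cone R x k (Finsupp.single v 1) = Finsupp.single (Fin.cons x v : Fin (k + 1) → X) 1 := by
  simp [cone]

lemma chainMap_single (f : X → Y) (v : Fin k → X) :
    chainMap R f k (Finsupp.single v 1) = Finsupp.single (f ∘ v) 1 := by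
  simp [chainMap]

lemma Chain.hom_ext {M : Type*} [AddCommMonoid M] [Module R M] {f g : Chain R X k →ₗ[R] M}
    (h : ∀ v, f (Finsupp.single v 1) = g (Finsupp.single v 1)) : f = g :=
  Finsupp.lhom_ext' fun v ↦ LinearMap.ext_ring (h v)

lemma chainMap_chainMap {Z : Type*} (f : X → Y) (g : Y → Z) (c : Chain R X k) :
    chainMap R g k (chainMap R f k c) = chainMap R (g ∘ f) k c :=
  Finsupp.mapDomain_comp.symm

lemma chainMap_id (c : Chain R X k) : chainMap R id k c = c :=
  Finsupp.mapDomain_id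

lemma chainMap_zero (f : X → X) (c : Chain R X 0) : chainMap R f 0 c = c := by
  have hf : (f ∘ · : (Fin 0 → X) → Fin 0 → X) = id := Subsingleton.elim _ _
  exact (congrArg (Finsupp.mapDomain · c) hf).trans Finsupp.mapDomain_id

lemma boundary_chainMap (f : X → Y) (c : Chain R X (k + 1)) :
    boundary R Y k (chainMap R f (k + 1) c) = chainMap R f k (boundary R X k c) := by
  have h : boundary R Y k ∘ₗ chainMap R f (k + 1) = chainMap R f k ∘ₗ boundary R X k :=
    Chain.hom_ext fun v ↦ by
      simp only [LinearMap.comp_apply, chainMap_single, boundary_single, map_sum, map_smul,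
        Function.comp_assoc]
  exact LinearMap.congr_fun h c

lemma boundary_single_cons (x : X) (v : Fin (k + 1) → X) :
    boundary R X (k + 1) (Finsupp.single (Fin.cons x v) 1) =
      Finsupp.single v 1 - cone R x k (boundary R X k (Finsupp.single v 1)) := by
  have hface (i : Fin (k + 1)) : (Fin.cons x v : Fin (k + 2) → X) ∘ i.succ.succAbove =
      Fin.cons x (v ∘ i.succAbove) := by
    funext j
    cases j using Fin.cases <;> simp
  rw [boundary_single, Fin.sum_univ_succ, boundary_single, map_sum, sub_eq_add_neg,
    ← Finset.sum_neg_distrib]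
  congr 1
  · simp
  · refine Finset.sum_congr rfl fun i _ ↦ ?_
    rw [map_smul, cone_single, hface, Fin.val_succ, pow_succ]
    simp

lemma boundary_cone (x : X) (c : Chain R X (k + 1)) :
    boundary R X (k + 1) (cone R x (k + 1) c) = c - cone R x k (boundary R X k c) := by
  have h : boundary R X (k + 1) ∘ₗ cone R x (k + 1) =
      LinearMap.id - cone R x k ∘ₗ boundary R X k :=
    Chain.hom_ext fun v ↦ by
      simpa only [LinearMap.comp_apply, cone_single, LinearMap.sub_apply, LinearMap.id_apply]
        using boundary_single_cons x v
  exact LinearMap.congr_fun h c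

lemma boundary_cone_zero (x : X) (c : Chain R X 0) : boundary R X 0 (cone R x 0 c) = c := by
  have h : boundary R X 0 ∘ₗ cone R x 0 = LinearMap.id :=
    Chain.hom_ext fun v ↦ by simp [cone_single, boundary_single, Subsingleton.elim _ v]
  exact LinearMap.congr_fun h c

lemma boundary_boundary (c : Chain R X (k + 2)) :
    boundary R X k (boundary R X (k + 1) c) = 0 := by
  have h : boundary R X k ∘ₗ boundary R X (k + 1) = 0 := by
    clear c
    induction k with
    | zero =>
      refine Chain.hom_ext fun v ↦ ?_
      rw [← Fin.cons_self_tail v, LinearMap.comp_apply, boundary_single_cons, map_sub,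
        boundary_cone_zero, sub_self, LinearMap.zero_apply]
    | succ k ih =>
      refine Chain.hom_ext fun v ↦ ?_
      rw [← Fin.cons_self_tail v, LinearMap.comp_apply, boundary_single_cons, map_sub,
        boundary_cone, ← LinearMap.comp_apply (boundary R X k), ih, LinearMap.zero_apply,
        map_zero, sub_zero, sub_self, LinearMap.zero_apply]
  exact LinearMap.congr_fun h c

lemma pairing_coboundary (a : Cochain R X k) (c : Chain R X (k + 1)) :
    pairing (coboundary a) c = pairing a (boundary R X k c) := by
  have h : pairing (coboundary a) = pairing a ∘ₗ boundary R X k :=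
    Chain.hom_ext fun v ↦ by simp [boundary_single, coboundary]
  exact LinearMap.congr_fun h c

lemma coboundary_coboundary (a : Cochain R X k) : coboundary (coboundary a) = 0 := by
  funext v
  have h : pairing (coboundary (coboundary a)) (Finsupp.single v 1) = 0 := by
    rw [pairing_coboundary, pairing_coboundary, boundary_boundary, map_zero]
  simpa using h

lemma pairing_congr {a b : Cochain R X k} {c : Chain R X k} {S : Set (Fin k → X)}
    (hc : c ∈ Finsupp.supported R R S) (h : ∀ v ∈ S, a v = b v) : pairing a c = pairing b c := by
  simp only [pairing, Finsupp.linearCombination_apply]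
  exact Finsupp.sum_congr fun v hv ↦ by rw [h v (hc hv)]

lemma map_mem_supported {l : ℕ} (f : Chain R X k →ₗ[R] Chain R Y l) {S : Set (Fin k → X)}
    {S' : Set (Fin l → Y)} (h : ∀ v ∈ S, f (Finsupp.single v 1) ∈ Finsupp.supported R R S')
    {c : Chain R X k} (hc : c ∈ Finsupp.supported R R S) : f c ∈ Finsupp.supported R R S' := by
  rw [Finsupp.supported_eq_span_single] at hc
  have hle : Submodule.span R ((fun v ↦ Finsupp.single v (1 : R)) '' S) ≤
      (Finsupp.supported R R S').comap f := by
    rw [Submodule.span_le]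
    rintro _ ⟨v, hv, rfl⟩
    exact h v hv
  exact hle hc

/-- The chain homotopy between the maps induced by `s` and `t` which cones off the defect
`t v - s v - homotopy (∂ v)` from the first vertex of `s v`. -/
noncomputable def homotopy (R : Type*) [CommRing R] (s t : X → X) :
    (k : ℕ) → Chain R X k →ₗ[R] Chain R X (k + 1)
  | 0 => 0
  | k + 1 => Finsupp.linearCombination R fun v ↦ cone R (s (v 0)) (k + 1)
      (Finsupp.single (t ∘ v) 1 - Finsupp.single (s ∘ v) 1 -
        homotopy R s t k (boundary R X k (Finsupp.single v 1)))

lemma homotopy_succ_single (s t : X → X) (v : Fin (k + 1) → X) :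
    homotopy R s t (k + 1) (Finsupp.single v 1) = cone R (s (v 0)) (k + 1)
      (Finsupp.single (t ∘ v) 1 - Finsupp.single (s ∘ v) 1 -
        homotopy R s t k (boundary R X k (Finsupp.single v 1))) := by
  rw [homotopy, Finsupp.linearCombination_single, one_smul]

lemma boundary_homotopy (s t : X → X) (c : Chain R X (k + 1)) :
    boundary R X (k + 1) (homotopy R s t (k + 1) c) =
      chainMap R t (k + 1) c - chainMap R s (k + 1) c - homotopy R s t k (boundary R X k c) := by
  have h : boundary R X (k + 1) ∘ₗ homotopy R s t (k + 1) =
      chainMap R t (k + 1) - chainMap R s (k + 1) - homotopy R s t k ∘ₗ boundary R X k := by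
    clear c
    induction k with
    | zero =>
      refine Chain.hom_ext fun v ↦ ?_
      simp only [LinearMap.comp_apply, LinearMap.sub_apply]
      rw [homotopy_succ_single, boundary_cone, ← chainMap_single, ← chainMap_single, sub_eq_self,
        map_sub (boundary R X 0), map_sub (boundary R X 0), boundary_chainMap, boundary_chainMap]
      simp [homotopy, chainMap_zero]
    | succ k ih =>
      refine Chain.hom_ext fun v ↦ ?_
      have hface := LinearMap.congr_fun ih (boundary R X (k + 1) (Finsupp.single v 1))
      simp only [LinearMap.comp_apply, LinearMap.sub_apply, boundary_boundary, map_zero,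
        sub_zero] at hface ⊢
      rw [homotopy_succ_single, boundary_cone, ← chainMap_single, ← chainMap_single, sub_eq_self,
        map_sub (boundary R X (k + 1)), map_sub (boundary R X (k + 1)), boundary_chainMap,
        boundary_chainMap, hface, sub_self, map_zero]
  exact LinearMap.congr_fun h c

lemma homotopy_single_mem_supported (s t : X → X) (v : Fin k → X) :
    homotopy R s t k (Finsupp.single v 1) ∈
      Finsupp.supported R R {w | ∀ i, ∃ j, w i = s (v j) ∨ w i = t (v j)} := by
  induction k with
  | zero => simp [homotopy]
  | succ k ih =>
    have hdefect : Finsupp.single (t ∘ v) 1 - Finsupp.single (s ∘ v) 1 -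
        homotopy R s t k (boundary R X k (Finsupp.single v 1)) ∈
        Finsupp.supported R R {w | ∀ i, ∃ j, w i = s (v j) ∨ w i = t (v j)} := by
      refine Submodule.sub_mem _ (Submodule.sub_mem _ ?_ ?_) ?_
      · exact Finsupp.single_mem_supported _ _ fun i ↦ ⟨i, Or.inr rfl⟩
      · exact Finsupp.single_mem_supported _ _ fun i ↦ ⟨i, Or.inl rfl⟩
      · rw [boundary_single, map_sum]
        refine Submodule.sum_mem _ fun i _ ↦ ?_
        rw [map_smul]
        refine Submodule.smul_mem _ _ (Finsupp.supported_mono (fun w hw i' ↦ ?_) (ih _))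
        obtain ⟨j, hj⟩ := hw i'
        exact ⟨_, hj⟩
    rw [homotopy_succ_single]
    refine map_mem_supported _ (fun w hw ↦ ?_) hdefect
    rw [cone_single]
    refine Finsupp.single_mem_supported _ _ fun i ↦ ?_
    cases i using Fin.cases with
    | zero => exact ⟨0, Or.inl rfl⟩
    | succ i => simpa using hw i

end Chains

/-! ### Filling cycles of small simplices -/

section Filling

variable {R : Type*} [CommRing R] {E : Type*} [NormedAddCommGroup E] {k : ℕ}

/-- The `k`-tuples in the closed ball of radius `ρ` whose points are pairwise `ε`-close. -/
def smallTuples (E : Type*) [NormedAddCommGroup E] (k : ℕ) (ε ρ : ℝ) : Set (Fin k → E) :=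
  {v | (∀ i, ‖v i‖ ≤ ρ) ∧ ∀ i j, dist (v i) (v j) < ε}

lemma smallTuples_mono {ε ε' ρ ρ' : ℝ} (hε : ε ≤ ε') (hρ : ρ ≤ ρ') :
    smallTuples E k ε ρ ⊆ smallTuples E k ε' ρ' :=
  fun _ hv ↦ ⟨fun i ↦ (hv.1 i).trans hρ, fun i j ↦ (hv.2 i j).trans_le hε⟩

lemma const_mem_smallTuples {ε ρ : ℝ} (hε : 0 < ε) {x : E} (hx : ‖x‖ ≤ ρ) :
    (fun _ ↦ x) ∈ smallTuples E k ε ρ :=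
  ⟨fun _ ↦ hx, fun _ _ ↦ by rwa [dist_self]⟩

variable [NormedSpace ℝ E]

lemma homotopy_smul_mem_supported {δ ε ρ a b : ℝ} (ha : a ∈ Set.Icc 0 1) (hb : b ∈ Set.Icc 0 1)
    (hab : δ + |a - b| * ρ < ε) {z : Chain R E k}
    (hz : z ∈ Finsupp.supported R R (smallTuples E k δ ρ)) :
    homotopy R (fun x : E ↦ a • x) (fun x ↦ b • x) k z ∈
      Finsupp.supported R R (smallTuples E (k + 1) ε ρ) := by
  refine map_mem_supported _ (fun v hv ↦ ?_) hz
  refine Finsupp.supported_mono ?_ (homotopy_single_mem_supported _ _ v)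
  have hnorm {r : ℝ} (hr : r ∈ Set.Icc (0 : ℝ) 1) (l : Fin k) : ‖r • v l‖ ≤ ρ := by
    rw [norm_smul, Real.norm_of_nonneg hr.1]
    exact (mul_le_of_le_one_left (norm_nonneg _) hr.2).trans (hv.1 l)
  have hdist {r : ℝ} (hr : r ∈ Set.Icc (0 : ℝ) 1) (l l' : Fin k) :
      dist (r • v l) (r • v l') < δ := by
    rw [dist_smul₀, Real.norm_of_nonneg hr.1]
    exact (mul_le_of_le_one_left dist_nonneg hr.2).trans_lt (hv.2 l l')
  have hmove (l : Fin k) : dist (a • v l) (b • v l) ≤ |a - b| * ρ := by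
    rw [dist_eq_norm, ← sub_smul, norm_smul, Real.norm_eq_abs]
    exact mul_le_mul_of_nonneg_left (hv.1 l) (abs_nonneg _)
  have hcross (l l' : Fin k) : dist (a • v l) (b • v l') < ε := by
    linarith [dist_triangle (a • v l) (a • v l') (b • v l'), hdist ha l l', hmove l']
  have hδε (l : Fin k) : δ < ε := by linarith [dist_nonneg.trans (hmove l)]
  refine fun w hw ↦ ⟨fun i ↦ ?_, fun i j ↦ ?_⟩
  · obtain ⟨l, h | h⟩ := hw i
    exacts [h ▸ hnorm ha l, h ▸ hnorm hb l]
  · obtain ⟨l, hl⟩ := hw i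
    obtain ⟨l', hl'⟩ := hw j
    rcases hl with hl | hl <;> rcases hl' with hl' | hl' <;> rw [hl, hl']
    · exact (hdist ha l l').trans (hδε l)
    · exact hcross l l'
    · rw [dist_comm]
      exact hcross l' l
    · exact (hdist hb l l').trans (hδε l)

lemma exists_boundary_eq_sub_chainMap_smul {δ ε ρ : ℝ} {M j : ℕ} (hjM : j ≤ M)
    (hM : δ + ρ / M < ε) {z : Chain R E (k + 1)}
    (hz : z ∈ Finsupp.supported R R (smallTuples E (k + 1) δ ρ)) (hcycle : boundary R E k z = 0) :
    ∃ w ∈ Finsupp.supported R R (smallTuples E (k + 2) ε ρ),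
      boundary R E (k + 1) w = z - chainMap R (fun x ↦ (1 - (j : ℝ) / M) • x) (k + 1) z := by
  have hmem {i : ℕ} (hi : i ≤ M) : 1 - (i : ℝ) / M ∈ Set.Icc (0 : ℝ) 1 := by
    have h0 : 0 ≤ (i : ℝ) / M := by positivity
    have h1 : (i : ℝ) / M ≤ 1 := div_le_one_of_le₀ (by exact_mod_cast hi) (by positivity)
    exact ⟨by linarith, by linarith⟩
  induction j with
  | zero =>
    refine ⟨0, Submodule.zero_mem _, ?_⟩
    have hid : (fun x : E ↦ (1 - ((0 : ℕ) : ℝ) / M) • x) = id := by funext x; simp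
    rw [hid, chainMap_id, map_zero, sub_self]
  | succ j ih =>
    obtain ⟨w, hw, hwz⟩ := ih (by lia)
    have hstep : (1 - (j : ℝ) / M) - (1 - ((j + 1 : ℕ) : ℝ) / M) = 1 / M := by push_cast; ring
    have hδ : δ + |(1 - (j : ℝ) / M) - (1 - ((j + 1 : ℕ) : ℝ) / M)| * ρ < ε := by
      rwa [hstep, abs_of_nonneg (by positivity), one_div_mul_eq_div]
    refine ⟨_, Submodule.sub_mem _ hw
      (homotopy_smul_mem_supported (hmem (by lia)) (hmem hjM) hδ hz), ?_⟩
    rw [map_sub, hwz, boundary_homotopy, hcycle, map_zero, sub_zero]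
    abel

lemma exists_boundary_eq_of_small {δ ε ρ : ℝ} (hρ : 0 ≤ ρ) (hε : 0 < ε) (hδε : δ < ε)
    {z : Chain R E (k + 1)} (hz : z ∈ Finsupp.supported R R (smallTuples E (k + 1) δ ρ))
    (hcycle : boundary R E k z = 0) :
    ∃ w ∈ Finsupp.supported R R (smallTuples E (k + 2) ε ρ), boundary R E (k + 1) w = z := by
  obtain ⟨M, hM⟩ := exists_nat_gt (ρ / (ε - δ))
  have hM0 : (0 : ℝ) < M := (div_nonneg hρ (sub_pos.2 hδε).le).trans_lt hM
  have hρM : δ + ρ / M < ε := by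
    rw [div_lt_iff₀ (sub_pos.2 hδε), mul_comm, ← div_lt_iff₀ hM0] at hM
    linarith
  obtain ⟨w, hw, hwz⟩ := exists_boundary_eq_sub_chainMap_smul le_rfl hρM hz hcycle
  have hzero : (fun x : E ↦ (1 - (M : ℝ) / M) • x) = fun _ ↦ 0 := by
    funext x
    rw [div_self hM0.ne', sub_self, zero_smul]
  rw [hzero] at hwz
  refine ⟨w + cone R 0 (k + 1) (chainMap R (fun _ ↦ 0) (k + 1) z), Submodule.add_mem _ hw ?_, ?_⟩
  · refine map_mem_supported (cone R 0 (k + 1) ∘ₗ chainMap R (fun _ ↦ 0) (k + 1)) (fun v _ ↦ ?_) hz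
    have hcons : (Fin.cons 0 ((fun _ ↦ 0) ∘ v) : Fin (k + 2) → E) = fun _ ↦ 0 := by
      funext i
      cases i using Fin.cases <;> rfl
    rw [LinearMap.comp_apply, chainMap_single, cone_single, hcons]
    exact Finsupp.single_mem_supported _ _ (const_mem_smallTuples hε (by simpa using hρ))
  · rw [map_add, hwz, boundary_cone, boundary_chainMap, hcycle]
    simp

end Filling

/-! ### The Smith operators -/

section SmithOperators

variable {R : Type*} [CommRing R] {X : Type*} {p k : ℕ}

/-- The Smith operators of a transformation `f` of order `p` on cochains: `T - 1` for `true` and the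
norm `1 + T + ⋯ + T ^ (p - 1)` for `false`, where `T` is induced by `f`. -/
def cochainOp (p : ℕ) (f : X → X) : Bool → Cochain R X k → Cochain R X k
  | true, a => fun v ↦ a (f ∘ v) - a v
  | false, a => fun v ↦ ∑ i ∈ Finset.range p, a (f^[i] ∘ v)

/-- The Smith operators on chains, dual to `cochainOp`. -/
noncomputable def chainOp (R : Type*) [CommRing R] (p : ℕ) (f : X → X) (k : ℕ) :
    Bool → Chain R X k →ₗ[R] Chain R X k
  | true => chainMap R f k - LinearMap.id
  | false => ∑ i ∈ Finset.range p, chainMap R f^[i] k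

lemma cochainOp_coboundary (f : X → X) (e : Bool) (a : Cochain R X k) :
    cochainOp p f e (coboundary a) = coboundary (cochainOp p f e a) := by
  funext v
  cases e
  · simp only [cochainOp, coboundary, Finset.mul_sum]
    exact Finset.sum_comm
  · simp only [cochainOp, coboundary, mul_sub, Finset.sum_sub_distrib]
    rfl

lemma boundary_chainOp (f : X → X) (e : Bool) (c : Chain R X (k + 1)) :
    boundary R X k (chainOp R p f (k + 1) e c) = chainOp R p f k e (boundary R X k c) := by
  cases e <;> simp [chainOp, boundary_chainMap]

lemma sum_chainMap_iterate_succ {f : X → X} (hf : f^[p] = id) (c : Chain R X k) :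
    ∑ i ∈ Finset.range p, chainMap R f^[i + 1] k c =
      ∑ i ∈ Finset.range p, chainMap R f^[i] k c := by
  have h := Finset.sum_range_succ' (fun i ↦ chainMap R f^[i] k c) p
  rw [Finset.sum_range_succ, hf] at h
  exact (add_right_cancel h).symm

lemma chainOp_chainOp {f : X → X} (hf : f^[p] = id) (e : Bool) (c : Chain R X k) :
    chainOp R p f k (!e) (chainOp R p f k e c) = 0 := by
  cases e
  · simp only [chainOp, Bool.not_false, LinearMap.sub_apply, LinearMap.id_apply,
      LinearMap.sum_apply, map_sum, chainMap_chainMap, ← Function.iterate_succ',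
      Finset.sum_sub_distrib]
    exact sub_eq_zero.2 (sum_chainMap_iterate_succ hf c)
  · simp only [chainOp, Bool.not_true, LinearMap.sub_apply, LinearMap.id_apply,
      LinearMap.sum_apply, map_sub, chainMap_chainMap, ← Function.iterate_succ]
    exact sub_eq_zero.2 (sum_chainMap_iterate_succ hf c)

lemma pairing_chainOp (f : X → X) (e : Bool) (a : Cochain R X k) (c : Chain R X k) :
    pairing a (chainOp R p f k e c) = pairing (cochainOp p f e a) c := by
  have h : pairing a ∘ₗ chainOp R p f k e = pairing (cochainOp p f e a) :=
    Chain.hom_ext fun v ↦ by cases e <;> simp [chainOp, cochainOp, chainMap_single]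
  exact LinearMap.congr_fun h c

lemma cochainOp_comp {Y : Type*} {f : X → X} {g : Y → Y} {L : X → Y} (hL : Function.Semiconj L f g)
    (e : Bool) (a : Cochain R Y k) :
    cochainOp p f e (fun v ↦ a (L ∘ v)) = fun v ↦ cochainOp p g e a (L ∘ v) := by
  funext v
  cases e
  · refine Finset.sum_congr rfl fun i _ ↦ congrArg a (funext fun j ↦ ?_)
    exact hL.iterate_right i (v j)
  · exact congrArg (a · - a (L ∘ v)) (funext fun j ↦ hL (v j))

end SmithOperators

/-! ### Labels -/

section Labels

/-- The vertices of the universal label complex: a free `ℤ / p`-orbit for every colour in `ι`, and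
two fixed vertices. -/
abbrev Vertex (p : ℕ) (ι : Type*) := (ι × ZMod p) ⊕ Bool

variable {p : ℕ} {ι : Type*} {B : Set Bool} {S : Set (Vertex p ι)}

/-- The action of `ℤ / p` on labels. -/
def shift (l : ZMod p) : Vertex p ι → Vertex p ι :=
  Sum.map (fun x ↦ (x.1, x.2 + l)) id

lemma shift_zero : shift (0 : ZMod p) = (id : Vertex p ι → Vertex p ι) := by
  funext x
  cases x <;> simp [shift]

lemma shift_comp_shift (l m : ZMod p) :
    shift l ∘ shift m = (shift (m + l) : Vertex p ι → Vertex p ι) := by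
  funext x
  cases x <;> simp [shift, add_assoc]

lemma iterate_shift_one (i : ℕ) :
    (shift (1 : ZMod p))^[i] = (shift (i : ZMod p) : Vertex p ι → Vertex p ι) := by
  induction i with
  | zero => rw [Function.iterate_zero, Nat.cast_zero, shift_zero]
  | succ i ih => rw [Function.iterate_succ', ih, shift_comp_shift, Nat.cast_succ]

/-- Compatibility of labels: distinct vertices of a free orbit are incompatible, and so are the two
fixed vertices. Fixed vertices outside `B` are discarded, being incompatible with themselves. -/
def Compatible (B : Set Bool) : Vertex p ι → Vertex p ι → Prop
  | .inl (c, l), .inl (c', l') => c = c' → l = l'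
  | .inr b, .inr b' => b = b' ∧ b ∈ B
  | _, _ => True

/-- The simplices of the label complex. -/
def IsSimplex (B : Set Bool) (S : Set (Vertex p ι)) : Prop :=
  ∀ x ∈ S, ∀ y ∈ S, Compatible B x y

/-- A set of labels is free if it contains a vertex which is not fixed. -/
def IsFree (S : Set (Vertex p ι)) : Prop :=
  ∃ x, Sum.inl x ∈ S

lemma Compatible.shift {x y : Vertex p ι} (h : Compatible B x y) (l : ZMod p) :
    Compatible B (shift l x) (shift l y) := by
  rcases x with ⟨c, m⟩ | b <;> rcases y with ⟨c', m'⟩ | b'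
  · exact fun hc ↦ congrArg (· + l) (h hc)
  · trivial
  · trivial
  · exact h

lemma IsSimplex.mono {S' : Set (Vertex p ι)} (h : IsSimplex B S) (hS : S' ⊆ S) :
    IsSimplex B S' :=
  fun x hx y hy ↦ h x (hS hx) y (hS hy)

lemma IsSimplex.comp {k l : ℕ} {v : Fin k → Vertex p ι} (h : IsSimplex B (Set.range v))
    (f : Fin l → Fin k) : IsSimplex B (Set.range (v ∘ f)) :=
  h.mono (Set.range_comp_subset_range f v)

lemma IsSimplex.shift {k : ℕ} {v : Fin k → Vertex p ι} (h : IsSimplex B (Set.range v))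
    (l : ZMod p) : IsSimplex B (Set.range (shift l ∘ v)) := by
  rintro _ ⟨i, rfl⟩ _ ⟨j, rfl⟩
  exact (h _ ⟨i, rfl⟩ _ ⟨j, rfl⟩).shift l

lemma inl_mem_range_shift_comp {k : ℕ} {v : Fin k → Vertex p ι} {l m : ZMod p} {c : ι} :
    Sum.inl (c, m + l) ∈ Set.range (shift l ∘ v) ↔ Sum.inl (c, m) ∈ Set.range v := by
  refine exists_congr fun i ↦ ?_
  rw [Function.comp_apply]
  cases v i <;> simp [shift, Prod.ext_iff]

lemma isFree_range_shift_comp {k : ℕ} {v : Fin k → Vertex p ι} {l : ZMod p} :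
    IsFree (Set.range (shift l ∘ v)) ↔ IsFree (Set.range v) := by
  constructor
  · rintro ⟨⟨c, m⟩, hm⟩
    exact ⟨(c, m - l), inl_mem_range_shift_comp.1 (by rwa [sub_add_cancel])⟩
  · rintro ⟨⟨c, m⟩, hm⟩
    exact ⟨(c, m + l), inl_mem_range_shift_comp.2 hm⟩

variable [LinearOrder ι]

/-- `l` is the position, in its orbit, of a vertex of `S` of minimal colour. -/
def IsPosition (S : Set (Vertex p ι)) (l : ZMod p) : Prop :=
  ∃ c, Sum.inl (c, l) ∈ S ∧ ∀ c' l', Sum.inl (c', l') ∈ S → c ≤ c'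

/-- The position of the vertex of minimal colour of a free simplex. -/
noncomputable def position (S : Set (Vertex p ι)) : ZMod p :=
  Classical.epsilon (IsPosition S)

lemma IsPosition.unique (hS : IsSimplex B S) {l l' : ZMod p} (h : IsPosition S l)
    (h' : IsPosition S l') : l = l' := by
  obtain ⟨c, hc, hmin⟩ := h
  obtain ⟨c', hc', hmin'⟩ := h'
  exact hS _ hc _ hc' (le_antisymm (hmin _ _ hc') (hmin' _ _ hc))

lemma IsPosition.shift {k : ℕ} {v : Fin k → Vertex p ι} {m : ZMod p}
    (h : IsPosition (Set.range v) m) (l : ZMod p) :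
    IsPosition (Set.range (shift l ∘ v)) (m + l) := by
  obtain ⟨c, hc, hmin⟩ := h
  refine ⟨c, inl_mem_range_shift_comp.2 hc, fun c' l' h' ↦ hmin c' (l' - l) ?_⟩
  rw [← inl_mem_range_shift_comp (l := l), sub_add_cancel]
  exact h'

variable [Finite ι]

lemma isPosition_position (h : IsFree S) : IsPosition S (position S) := by
  obtain ⟨⟨c₀, l₀⟩, h₀⟩ := h
  obtain ⟨c, ⟨l, hl⟩, hmin⟩ := Set.exists_min_image {c | ∃ l, Sum.inl (c, l) ∈ S} id
    (Set.toFinite _) ⟨c₀, l₀, h₀⟩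
  exact Classical.epsilon_spec ⟨l, c, hl, fun c' l' h' ↦ hmin c' ⟨l', h'⟩⟩

lemma position_shift_comp {k : ℕ} {v : Fin k → Vertex p ι} (hv : IsSimplex B (Set.range v))
    (hfree : IsFree (Set.range v)) (l : ZMod p) :
    position (Set.range (shift l ∘ v)) = position (Set.range v) + l :=
  (isPosition_position (isFree_range_shift_comp.2 hfree)).unique (hv.shift l)
    ((isPosition_position hfree).shift l)

end Labels

/-! ### Alternating cochains -/

section Alternating

variable {p k : ℕ} {ι : Type*} {B : Set Bool} {R : Type*} [CommRing R]

/-- A cochain which alternates on the simplices of the label complex. -/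
def IsAlternating (B : Set Bool) (a : Cochain R (Vertex p ι) k) : Prop :=
  ∀ v, IsSimplex B (Set.range v) → ∀ σ : Equiv.Perm (Fin k),
    a (v ∘ σ) = Equiv.Perm.sign σ • a v

lemma isAlternating_of_subsingleton [Subsingleton (Fin k)] (a : Cochain R (Vertex p ι) k) :
    IsAlternating B a := fun v _ σ ↦ by
  rw [Subsingleton.elim σ 1, Equiv.Perm.coe_one, Function.comp_id, Equiv.Perm.sign_one, one_smul]

lemma swap_comp_castSucc_succAbove (i : Fin k) :
    Equiv.swap i.castSucc i.succ ∘ i.castSucc.succAbove = i.succ.succAbove := by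
  funext l
  simp only [Function.comp_apply, Equiv.swap_apply_def, Fin.succAbove, Fin.ext_iff, Fin.lt_def]
  split_ifs <;> simp_all <;> lia

lemma swap_comp_succ_succAbove (i : Fin k) :
    Equiv.swap i.castSucc i.succ ∘ i.succ.succAbove = i.castSucc.succAbove := by
  rw [← swap_comp_castSucc_succAbove, ← Function.comp_assoc, ← Equiv.coe_trans,
    Equiv.swap_swap, Equiv.coe_refl, Function.id_comp]

lemma exists_swap_comp_succAbove {i j m : Fin (k + 1)} (hij : i ≠ j) (hi : m ≠ i) (hj : m ≠ j) :
    ∃ i' j' : Fin k, i' ≠ j' ∧ Equiv.swap i j ∘ m.succAbove = m.succAbove ∘ Equiv.swap i' j' := by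
  obtain ⟨i', rfl⟩ := Fin.exists_succAbove_eq hi.symm
  obtain ⟨j', rfl⟩ := Fin.exists_succAbove_eq hj.symm
  exact ⟨i', j', fun h ↦ hij (congrArg _ h),
    Function.Injective.swap_comp Fin.succAbove_right_injective i' j'⟩

lemma IsAlternating.coboundary_comp_swap {a : Cochain R (Vertex p ι) k} (ha : IsAlternating B a)
    {v : Fin (k + 1) → Vertex p ι} (hv : IsSimplex B (Set.range v)) (i : Fin k) :
    coboundary a (v ∘ Equiv.swap i.castSucc i.succ) = -coboundary a v := by
  have hne : i.castSucc ≠ i.succ := Fin.castSucc_lt_succ.ne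
  rw [coboundary, coboundary, ← Finset.sum_neg_distrib]
  refine Fintype.sum_equiv (Equiv.swap i.castSucc i.succ) _ _ fun j ↦ ?_
  rw [Function.comp_assoc]
  by_cases hj : j = i.castSucc
  · rw [hj, Equiv.swap_apply_left, swap_comp_castSucc_succAbove]
    simp [pow_succ]
  by_cases hj' : j = i.succ
  · rw [hj', Equiv.swap_apply_right, swap_comp_succ_succAbove]
    simp [pow_succ]
  obtain ⟨l, l', hl, hswap⟩ := exists_swap_comp_succAbove hne hj hj'
  rw [Equiv.swap_apply_of_ne_of_ne hj hj', hswap, ← Function.comp_assoc, ha _ (hv.comp _),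
    Equiv.Perm.sign_swap hl]
  simp

lemma IsAlternating.coboundary {a : Cochain R (Vertex p ι) k} (ha : IsAlternating B a) :
    IsAlternating B (coboundary a) := by
  intro v hv σ
  have hσ : σ ∈ Submonoid.closure
      (Set.range fun i : Fin k ↦ Equiv.swap i.castSucc i.succ) := by
    rw [Equiv.Perm.mclosure_swap_castSucc_succ]
    trivial
  induction hσ using Submonoid.closure_induction generalizing v with
  | mem _ hx =>
    obtain ⟨i, rfl⟩ := hx
    rw [ha.coboundary_comp_swap hv, Equiv.Perm.sign_swap Fin.castSucc_lt_succ.ne, Units.neg_smul,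
      one_smul]
  | one => simp
  | mul x y _ _ hx hy =>
    rw [Equiv.Perm.coe_mul, ← Function.comp_assoc, hy _ (hv.comp _), hx _ hv, smul_smul, ← map_mul,
      Equiv.Perm.sign_mul, Equiv.Perm.sign_mul, mul_comm]

lemma IsSimplex.eq_of_map_fst_eq {S : Set (Vertex p ι)} (hS : IsSimplex B S) {x y : Vertex p ι}
    (hx : x ∈ S) (hy : y ∈ S) (h : (Sum.map Prod.fst id x : ι ⊕ Bool) = Sum.map Prod.fst id y) :
    x = y := by
  have hxy := hS x hx y hy
  rcases x with ⟨c, l⟩ | b <;> rcases y with ⟨c', l'⟩ | b' <;>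
    simp only [Sum.map_inl, Sum.map_inr, Sum.inl.injEq, Sum.inr.injEq, reduceCtorEq, id] at h
  · rw [h, hxy h]
  · rw [h]

lemma IsAlternating.eq_zero_of_card_lt [IsDomain R] (h2 : (2 : R) ≠ 0) [Fintype ι]
    {a : Cochain R (Vertex p ι) k} (ha : IsAlternating B a) (hk : Fintype.card (ι ⊕ Bool) < k)
    {v : Fin k → Vertex p ι} (hv : IsSimplex B (Set.range v)) : a v = 0 := by
  obtain ⟨i, j, hij, h⟩ := Fintype.exists_ne_map_eq_of_card_lt
    (fun i : Fin k ↦ (Sum.map Prod.fst id (v i) : ι ⊕ Bool)) (by simpa using hk)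
  have heq : v i = v j := hv.eq_of_map_fst_eq ⟨i, rfl⟩ ⟨j, rfl⟩ h
  have hswap : v ∘ Equiv.swap i j = v := by
    funext l
    rw [Function.comp_apply, Equiv.swap_apply_def]
    split_ifs with hi hj
    exacts [hi ▸ heq.symm, hj ▸ heq, rfl]
  have hneg := ha v hv (Equiv.swap i j)
  rw [hswap, Equiv.Perm.sign_swap hij, Units.neg_smul, one_smul, eq_neg_iff_add_eq_zero,
    ← two_mul] at hneg
  exact (mul_eq_zero.1 hneg).resolve_left h2

end Alternating

/-! ### The Smith ladder -/

section Ladder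

variable {p k : ℕ} {ι : Type*} {B : Set Bool} {R : Type*} [CommRing R]

/-- The cochains at the rungs of Smith's ladder: alternating cocycles of the label complex relative
to its fixed vertices which are killed by the operator complementary to `e`. -/
structure SmithCocycle (B : Set Bool) (e : Bool) (a : Cochain R (Vertex p ι) k) : Prop where
  alternating : IsAlternating B a
  closed : ∀ v, IsSimplex B (Set.range v) → coboundary a v = 0
  relative : ∀ v, IsSimplex B (Set.range v) → ¬IsFree (Set.range v) → a v = 0
  killed : ∀ v, IsSimplex B (Set.range v) → cochainOp p (shift 1) (!e) a v = 0

lemma coboundary_congr {a b : Cochain R (Vertex p ι) k}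
    (h : ∀ v, IsSimplex B (Set.range v) → a v = b v) {v : Fin (k + 1) → Vertex p ι}
    (hv : IsSimplex B (Set.range v)) : coboundary a v = coboundary b v :=
  Finset.sum_congr rfl fun _ _ ↦ by rw [h _ (hv.comp _)]

variable [NeZero p]

lemma sum_range_natCast_zmod {M : Type*} [AddCommMonoid M] (g : ZMod p → M) :
    ∑ i ∈ Finset.range p, g i = ∑ l, g l :=
  Finset.sum_bij (fun i _ ↦ (i : ZMod p)) (fun _ _ ↦ Finset.mem_univ _)
    (fun i hi j hj h ↦ by
      rwa [ZMod.natCast_eq_natCast_iff', Nat.mod_eq_of_lt (Finset.mem_range.1 hi),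
        Nat.mod_eq_of_lt (Finset.mem_range.1 hj)] at h)
    (fun l _ ↦ ⟨l.val, Finset.mem_range.2 l.val_lt, ZMod.natCast_zmod_val l⟩) fun _ _ ↦ rfl

lemma sum_range_val_add_one {M : Type*} [AddCommMonoid M] {g : ℕ → M}
    (hg : ∑ i ∈ Finset.range p, g i = 0) (s : ZMod p) :
    ∑ i ∈ Finset.range (s + 1).val, g i = ∑ i ∈ Finset.range s.val, g i + g s.val := by
  have hval : (s + 1).val = (s.val + 1) % p := by
    rw [← ZMod.val_natCast, Nat.cast_succ, ZMod.natCast_zmod_val]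
  rw [← Finset.sum_range_succ, hval]
  rcases (Nat.succ_le_of_lt s.val_lt).lt_or_eq with hs | hs
  · rw [Nat.mod_eq_of_lt hs]
  · rw [← Nat.succ_eq_add_one, hs, Nat.mod_self, Finset.sum_range_zero, hg]

lemma cochainOp_shift_false (a : Cochain R (Vertex p ι) k) (v : Fin k → Vertex p ι) :
    cochainOp p (shift 1) false a v = ∑ l : ZMod p, a (shift l ∘ v) := by
  simp only [cochainOp, iterate_shift_one]
  exact sum_range_natCast_zmod fun l ↦ a (shift l ∘ v)

lemma eq_of_cochainOp_true_eq_zero {a : Cochain R (Vertex p ι) k}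
    (h : ∀ v, IsSimplex B (Set.range v) → cochainOp p (shift 1) true a v = 0) (l : ZMod p)
    {v : Fin k → Vertex p ι} (hv : IsSimplex B (Set.range v)) : a (shift l ∘ v) = a v := by
  rw [← ZMod.natCast_zmod_val l]
  induction l.val with
  | zero => rw [Nat.cast_zero, shift_zero, Function.id_comp]
  | succ i ih =>
    rw [Nat.cast_succ, ← shift_comp_shift, Function.comp_assoc, ← ih]
    exact sub_eq_zero.1 (h _ (hv.shift i))

variable [LinearOrder ι] [Finite ι] {a : Cochain R (Vertex p ι) k}

open Classical in
lemma SmithCocycle.exists_norm_eq (h : SmithCocycle B false a) :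
    ∃ b : Cochain R (Vertex p ι) k, IsAlternating B b ∧
      (∀ v, IsSimplex B (Set.range v) → ¬IsFree (Set.range v) → b v = 0) ∧
      ∀ v, IsSimplex B (Set.range v) → cochainOp p (shift 1) false b v = a v := by
  refine ⟨fun v ↦ if IsFree (Set.range v) ∧ position (Set.range v) = 0 then a v else 0,
    fun v hv σ ↦ ?_, fun v _ hfree ↦ if_neg fun h ↦ hfree h.1, fun v hv ↦ ?_⟩
  · simp only [σ.surjective.range_comp, smul_ite, smul_zero, h.alternating v hv σ]
  · rw [cochainOp_shift_false]
    simp only [isFree_range_shift_comp]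
    by_cases hfree : IsFree (Set.range v)
    · simp only [position_shift_comp hv hfree, hfree, true_and, add_eq_zero_iff_neg_eq,
        Finset.sum_ite_eq, Finset.mem_univ, if_true]
      exact eq_of_cochainOp_true_eq_zero h.killed _ hv
    · simp only [hfree, false_and, if_false, Finset.sum_const_zero]
      exact (h.relative v hv hfree).symm

open Classical in
lemma SmithCocycle.exists_sub_eq (h : SmithCocycle B true a) :
    ∃ b : Cochain R (Vertex p ι) k, IsAlternating B b ∧
      (∀ v, IsSimplex B (Set.range v) → ¬IsFree (Set.range v) → b v = 0) ∧
      ∀ v, IsSimplex B (Set.range v) → cochainOp p (shift 1) true b v = a v := by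
  refine ⟨fun v ↦ if IsFree (Set.range v) then ∑ i ∈ Finset.range (position (Set.range v)).val,
      a (shift (i - position (Set.range v)) ∘ v) else 0,
    fun v hv σ ↦ ?_, fun v _ hfree ↦ if_neg hfree, fun v hv ↦ ?_⟩
  · simp only [σ.surjective.range_comp, smul_ite, smul_zero, Finset.smul_sum]
    congr 1
    exact Finset.sum_congr rfl fun i _ ↦ h.alternating _ (hv.shift _) σ
  · simp only [cochainOp, isFree_range_shift_comp]
    by_cases hfree : IsFree (Set.range v)
    · set s := position (Set.range v)
      have hsum : ∑ i ∈ Finset.range p, a (shift (i - s) ∘ v) = 0 := by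
        rw [sum_range_natCast_zmod fun l ↦ a (shift (l - s) ∘ v)]
        refine ((Equiv.subRight s).sum_comp fun l ↦ a (shift l ∘ v)).trans ?_
        rw [← cochainOp_shift_false]
        exact h.killed v hv
      have hcomp (i : ℕ) : shift ((i : ZMod p) - (s + 1)) ∘ shift 1 ∘ v =
          shift ((i : ZMod p) - s) ∘ v := by
        rw [← Function.comp_assoc, shift_comp_shift, add_sub_left_comm, sub_add_cancel_right,
          ← sub_eq_add_neg]
      rw [if_pos hfree, if_pos hfree, position_shift_comp hv hfree]
      refine (congrArg (· - _) (Finset.sum_congr rfl fun i _ ↦ congrArg a (hcomp i))).trans ?_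
      rw [sum_range_val_add_one hsum, add_sub_cancel_left, ZMod.natCast_zmod_val, sub_self,
        shift_zero, Function.id_comp]
    · rw [if_neg hfree, if_neg hfree, sub_zero, h.relative v hv hfree]

lemma SmithCocycle.step {e : Bool} (h : SmithCocycle B e a) :
    ∃ b : Cochain R (Vertex p ι) k,
      (∀ v, IsSimplex B (Set.range v) → cochainOp p (shift 1) e b v = a v) ∧
        SmithCocycle B (!e) (coboundary b) := by
  obtain ⟨b, halt, hrel, hb⟩ : ∃ b : Cochain R (Vertex p ι) k, IsAlternating B b ∧
      (∀ v, IsSimplex B (Set.range v) → ¬IsFree (Set.range v) → b v = 0) ∧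
      ∀ v, IsSimplex B (Set.range v) → cochainOp p (shift 1) e b v = a v := by
    cases e
    exacts [h.exists_norm_eq, h.exists_sub_eq]
  refine ⟨b, hb, halt.coboundary, fun v _ ↦ ?_, fun v hv hfree ↦ ?_, fun v hv ↦ ?_⟩
  · rw [coboundary_coboundary, Pi.zero_apply]
  · refine Finset.sum_eq_zero fun i _ ↦ ?_
    rw [hrel _ (hv.comp _), mul_zero]
    rintro ⟨x, j, hj⟩
    exact hfree ⟨x, _, hj⟩
  · rw [Bool.not_not, cochainOp_coboundary, coboundary_congr hb hv]
    exact h.closed v hv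

end Ladder

/-! ### Chains detecting the cocycles of the ladder -/

section Detection

variable {R : Type*} [CommRing R] {p k : ℕ} {ι : Type*} {B : Set Bool}

lemma chainOp_mem_supported {X : Type*} {h : X → X} (hp : 1 < p) {V V' : Set (Fin k → X)}
    (hV : ∀ v ∈ V, ∀ i < p, h^[i] ∘ v ∈ V') (e : Bool) {c : Chain R X k}
    (hc : c ∈ Finsupp.supported R R V) :
    chainOp R p h k e c ∈ Finsupp.supported R R V' := by
  have hmap : ∀ i < p, chainMap R h^[i] k c ∈ Finsupp.supported R R V' := fun i hi ↦ by
    refine map_mem_supported _ (fun v hv ↦ ?_) hc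
    rw [chainMap_single]
    exact Finsupp.single_mem_supported _ _ (hV v hv i hi)
  cases e
  · rw [chainOp, LinearMap.sum_apply]
    exact Submodule.sum_mem _ fun i hi ↦ hmap i (Finset.mem_range.1 hi)
  · exact Submodule.sub_mem _ (hmap 1 hp)
      (Finsupp.supported_mono (fun v hv ↦ hV v hv 0 (by lia)) hc)

variable {E : Type*} [NormedAddCommGroup E] {h : E → E}

/-- An equivariant labelling of the points of `E` which sends small tuples of points of the ball of
radius `ρ` to simplices. -/
structure IsLabelling (h : E → E) (B : Set Bool) (ε ρ : ℝ) (L : E → Vertex p ι) : Prop where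
  semiconj : Function.Semiconj L h (shift 1)
  isSimplex {k : ℕ} : ∀ v ∈ smallTuples E k ε ρ, IsSimplex B (Set.range (L ∘ v))

/-- A cochain `a` is detected by the labellings in `𝓛` if, at every scale, there is a chain in a
fixed ball which is a cycle modulo the Smith operator `e` and on which `a` evaluates to `1` through
every labelling in `𝓛` of that scale. -/
def IsDetected (h : E → E) (B : Set Bool) (𝓛 : Set (E → Vertex p ι)) (e : Bool)
    (a : Cochain R (Vertex p ι) (k + 1)) : Prop :=
  ∃ ρ : ℝ, 0 ≤ ρ ∧ ∀ ε > 0, ∃ c ∈ Finsupp.supported R R (smallTuples E (k + 1) ε ρ),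
    chainOp R p h k e (boundary R E k c) = 0 ∧
      ∀ L ∈ 𝓛, IsLabelling h B ε ρ L → pairing (fun v ↦ a (L ∘ v)) c = 1

section Uniform

variable [ProperSpace E]

lemma exists_norm_iterate_le (hc : Continuous h) (p : ℕ) (ρ : ℝ) :
    ∃ ρ', ∀ i < p, ∀ x, ‖x‖ ≤ ρ → ‖h^[i] x‖ ≤ ρ' := by
  have horbit : Continuous fun x (i : Fin p) ↦ h^[i] x := continuous_pi fun i ↦ hc.iterate i
  obtain ⟨ρ', hρ'⟩ := (isCompact_closedBall (0 : E) ρ).exists_bound_of_continuousOn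
    horbit.continuousOn
  exact ⟨ρ', fun i hi x hx ↦ (norm_le_pi_norm (fun i : Fin p ↦ h^[i] x) ⟨i, hi⟩).trans
    (hρ' x (mem_closedBall_zero_iff.2 hx))⟩

lemma exists_dist_iterate_lt (hc : Continuous h) (p : ℕ) (ρ : ℝ) {ε : ℝ} (hε : 0 < ε) :
    ∃ δ > 0, ∀ x y, ‖x‖ ≤ ρ → ‖y‖ ≤ ρ → dist x y < δ → ∀ i < p, dist (h^[i] x) (h^[i] y) < ε := by
  have horbit : Continuous fun x (i : Fin p) ↦ h^[i] x := continuous_pi fun i ↦ hc.iterate i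
  have hunif := (isCompact_closedBall (0 : E) ρ).uniformContinuousOn_of_continuous
    horbit.continuousOn
  obtain ⟨δ, hδ, hdist⟩ := Metric.uniformContinuousOn_iff.1 hunif ε hε
  refine ⟨δ, hδ, fun x y hx hy hxy i hi ↦ ?_⟩
  exact (dist_le_pi_dist _ _ (⟨i, hi⟩ : Fin p)).trans_lt
    (hdist x (mem_closedBall_zero_iff.2 hx) y (mem_closedBall_zero_iff.2 hy) hxy)

lemma exists_iterate_comp_mem_smallTuples (hc : Continuous h) (p : ℕ) (ρ : ℝ) :
    ∃ ρ', ∀ ε > 0, ∃ δ > 0, ∀ k, ∀ v ∈ smallTuples E k δ ρ, ∀ i < p,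
      h^[i] ∘ v ∈ smallTuples E k ε ρ' := by
  obtain ⟨ρ', hρ'⟩ := exists_norm_iterate_le hc p ρ
  refine ⟨ρ', fun ε hε ↦ ?_⟩
  obtain ⟨δ, hδ, hdist⟩ := exists_dist_iterate_lt hc p ρ hε
  exact ⟨δ, hδ, fun k v hv i hi ↦ ⟨fun j ↦ hρ' i hi _ (hv.1 j), fun j l ↦
    hdist _ _ (hv.1 j) (hv.1 l) (hv.2 j l) i hi⟩⟩

end Uniform

variable [NormedSpace ℝ E] [ProperSpace E] {𝓛 : Set (E → Vertex p ι)} {e : Bool}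

lemma IsDetected.step (hp : 1 < p) (hc : Continuous h) (hh : h^[p] = id)
    {a b : Cochain R (Vertex p ι) (k + 1)} (ha : IsDetected h B 𝓛 e a)
    (hb : ∀ v, IsSimplex B (Set.range v) → cochainOp p (shift 1) e b v = a v) :
    IsDetected h B 𝓛 (!e) (coboundary b) := by
  obtain ⟨ρ, hρ, hdetect⟩ := ha
  obtain ⟨ρ', hρ'⟩ := exists_iterate_comp_mem_smallTuples hc p ρ
  have hρ0 : 0 ≤ ρ' := by
    obtain ⟨δ, hδ, hmem⟩ := hρ' 1 one_pos
    exact (norm_nonneg _).trans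
      ((hmem 1 _ (const_mem_smallTuples hδ (by rwa [norm_zero])) 0 (by lia)).1 0)
  refine ⟨ρ', hρ0, fun ε hε ↦ ?_⟩
  obtain ⟨δ, hδ, hmem⟩ := hρ' (ε / 2) (half_pos hε)
  obtain ⟨c, hcδ, hcycle, hpair⟩ := hdetect δ hδ
  obtain ⟨w, hw, hwc⟩ := exists_boundary_eq_of_small hρ0 hε (half_lt_self hε)
    (chainOp_mem_supported hp (hmem _) e hcδ) (by rw [boundary_chainOp, hcycle])
  refine ⟨w, hw, by rw [hwc, chainOp_chainOp hh], fun L hL𝓛 hL ↦ ?_⟩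
  have hLδ : IsLabelling h B δ ρ L := ⟨hL.semiconj, fun v hv ↦
    hL.isSimplex v (smallTuples_mono (half_le_self hε.le) le_rfl (hmem _ v hv 0 (by lia)))⟩
  calc pairing (fun v ↦ coboundary b (L ∘ v)) w
      = pairing (fun v ↦ b (L ∘ v)) (chainOp R p h (k + 1) e c) := by
        rw [← hwc, ← pairing_coboundary]; rfl
    _ = pairing (fun v ↦ cochainOp p (shift 1) e b (L ∘ v)) c := by
        rw [pairing_chainOp, cochainOp_comp hL.semiconj]
    _ = pairing (fun v ↦ a (L ∘ v)) c := pairing_congr hcδ fun v hv ↦ hb _ (hLδ.isSimplex v hv)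
    _ = 1 := hpair L hL𝓛 hLδ

-- Climbing the ladder keeps the cocycle detected, but alternating cochains vanish in high degrees.
theorem SmithCocycle.exists_forall_not_isLabelling [IsDomain R] (h2 : (2 : R) ≠ 0) (hp : 1 < p)
    [LinearOrder ι] [Finite ι] (hc : Continuous h) (hh : h^[p] = id)
    {a : Cochain R (Vertex p ι) (k + 1)} (ha : SmithCocycle B e a) (hdet : IsDetected h B 𝓛 e a) :
    ∃ ρ : ℝ, ∀ ε > 0, ∀ L ∈ 𝓛, ¬IsLabelling h B ε ρ L := by
  have : NeZero p := ⟨by lia⟩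
  have := Fintype.ofFinite ι
  have hclimb (j : ℕ) : ∃ e', ∃ a' : Cochain R (Vertex p ι) (k + j + 1),
      SmithCocycle B e' a' ∧ IsDetected h B 𝓛 e' a' := by
    induction j with
    | zero => exact ⟨e, a, ha, hdet⟩
    | succ j ih =>
      obtain ⟨e', a', ha', hdet'⟩ := ih
      obtain ⟨b, hb, hcocycle⟩ := ha'.step
      exact ⟨!e', coboundary b, hcocycle, hdet'.step hp hc hh hb⟩
  obtain ⟨e', a', ha', ρ, -, hdetect⟩ := hclimb (Fintype.card (ι ⊕ Bool))
  refine ⟨ρ, fun ε hε L hL𝓛 hL ↦ one_ne_zero (α := R) ?_⟩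
  obtain ⟨c, hcε, -, hpair⟩ := hdetect ε hε
  rw [← hpair L hL𝓛 hL, pairing_congr (b := 0) hcε fun v hv ↦
    ha'.alternating.eq_zero_of_card_lt h2 (by lia) (hL.isSimplex v hv)]
  simp

end Detection

/-! ### The bottom of the ladder -/

section Bottom

variable {p : ℕ} {ι : Type*} {E : Type*} [NormedAddCommGroup E] {h : E → E}

lemma not_inr_mem_of_isSimplex_empty {S : Set (Vertex p ι)} (hS : IsSimplex ∅ S) (b : Bool) :
    Sum.inr b ∉ S :=
  fun hb ↦ (hS _ hb _ hb).2

lemma smithCocycle_one :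
    SmithCocycle ∅ true (1 : Cochain (ZMod p) (Vertex p ι) 1) where
  alternating := isAlternating_of_subsingleton _
  closed v _ := by simp [coboundary, Fin.sum_univ_succ]
  relative v hv hfree := by
    refine (hfree ?_).elim
    cases hv0 : v 0 with
    | inl x => exact ⟨x, 0, hv0⟩
    | inr b => exact (not_inr_mem_of_isSimplex_empty hv b ⟨0, hv0⟩).elim
  killed v _ := by simp [cochainOp]

lemma isDetected_one :
    IsDetected h ∅ Set.univ true (1 : Cochain (ZMod p) (Vertex p ι) 1) := by
  refine ⟨0, le_rfl, fun ε hε ↦ ⟨Finsupp.single (fun _ ↦ 0) 1, Finsupp.single_mem_supported _ _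
    (const_mem_smallTuples hε norm_zero.le), ?_, fun L _ _ ↦ by simp⟩⟩
  rw [chainOp, LinearMap.sub_apply, chainMap_zero, LinearMap.id_apply, sub_self]

/-- The indicator function of the fixed vertex `true`, as a `0`-cochain. -/
def fixedIndicator (p : ℕ) (ι : Type*) : Cochain (ZMod p) (Vertex p ι) 1 := fun v ↦
  Sum.elim (fun _ ↦ 0) (fun b ↦ if b then 1 else 0) (v 0)

lemma smithCocycle_coboundary_fixedIndicator :
    SmithCocycle Set.univ true (coboundary (fixedIndicator p ι)) where
  alternating := (isAlternating_of_subsingleton _).coboundary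
  closed v _ := by rw [coboundary_coboundary, Pi.zero_apply]
  relative v hv hfree := by
    have heq : v 0 = v 1 := by
      have h01 := hv _ ⟨0, rfl⟩ _ ⟨1, rfl⟩
      cases hv0 : v 0 with
      | inl x => exact (hfree ⟨x, 0, hv0⟩).elim
      | inr b => cases hv1 : v 1 with
        | inl x => exact (hfree ⟨x, 1, hv1⟩).elim
        | inr b' =>
          rw [hv0, hv1] at h01
          rw [h01.1]
    simp [coboundary, Fin.sum_univ_succ, fixedIndicator, heq]
  killed v _ := by
    have hshift (l : ZMod p) (w : Fin 1 → Vertex p ι) :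
        fixedIndicator p ι (shift l ∘ w) = fixedIndicator p ι w := by
      rw [fixedIndicator, fixedIndicator, Function.comp_apply]
      cases w 0 <;> rfl
    have hnorm : cochainOp p (shift 1) false (fixedIndicator p ι) = 0 := by
      funext w
      simp [cochainOp, iterate_shift_one, hshift]
    rw [Bool.not_true, cochainOp_coboundary, hnorm]
    simp [coboundary]

lemma isDetected_coboundary_fixedIndicator [NormedSpace ℝ E] {x y : E} (hx : h x = x)
    (hy : h y = y) :
    IsDetected h Set.univ {L : E → Vertex p ι | L x = .inr false ∧ L y = .inr true} true
      (coboundary (fixedIndicator p ι)) := by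
  have hρ : 0 ≤ max ‖x‖ ‖y‖ := le_max_of_le_left (norm_nonneg _)
  refine ⟨max ‖x‖ ‖y‖, hρ, fun ε hε ↦ ?_⟩
  obtain ⟨w, hw, hwz⟩ := exists_boundary_eq_of_small (R := ZMod p) (ρ := max ‖x‖ ‖y‖)
    (z := Finsupp.single (fun _ : Fin 1 ↦ y) 1 - Finsupp.single (fun _ : Fin 1 ↦ x) 1)
    hρ hε (half_lt_self hε)
    (Submodule.sub_mem _
      (Finsupp.single_mem_supported _ _ (const_mem_smallTuples (half_pos hε) (le_max_right _ _)))
      (Finsupp.single_mem_supported _ _ (const_mem_smallTuples (half_pos hε) (le_max_left _ _))))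
    (by
      rw [map_sub, boundary_single, boundary_single, sub_eq_zero]
      exact Finset.sum_congr rfl fun i _ ↦ by rw [Subsingleton.elim ((fun _ ↦ y) ∘ _) _])
  have hconst {z : E} (hz : h z = z) : (h ∘ fun _ : Fin 1 ↦ z) = fun _ ↦ z := funext fun _ ↦ hz
  refine ⟨w, hw, ?_, fun L hL _ ↦ ?_⟩
  · rw [hwz, chainOp, LinearMap.sub_apply, LinearMap.id_apply, map_sub, chainMap_single,
      chainMap_single, hconst hx, hconst hy, sub_self]
  · calc pairing (fun v ↦ coboundary (fixedIndicator p ι) (L ∘ v)) w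
        = pairing (fun v ↦ fixedIndicator p ι (L ∘ v)) (boundary (ZMod p) E 1 w) := by
          rw [← pairing_coboundary]; rfl
      _ = 1 := by simp [hwz, fixedIndicator, hL.1, hL.2]

end Bottom

/-! ### Labelling points by the peaks of their orbits -/

section Peak

variable {p n : ℕ} {h : EuclideanSpace ℝ (Fin n) → EuclideanSpace ℝ (Fin n)} {η η' : ℝ}
  {x y : EuclideanSpace ℝ (Fin n)} {c : Fin n ×ₗ Fin p} {S S' : Finset (ZMod p)}

/-- The `i`-th coordinate of the orbit of `x`, as a function of the time in `ZMod p`. -/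
def orbitCoord (p : ℕ) (h : EuclideanSpace ℝ (Fin n) → EuclideanSpace ℝ (Fin n))
    (x : EuclideanSpace ℝ (Fin n)) (i : Fin n) (k : ZMod p) : ℝ :=
  (h^[k.val] x) i

/-- For the colour `c = (i, m)`, the set `S` consists of `m` times at which the `i`-th coordinate of
the orbit of `x` exceeds by more than `η` its values at all other times. -/
structure IsPeak (h : EuclideanSpace ℝ (Fin n) → EuclideanSpace ℝ (Fin n)) (η : ℝ)
    (x : EuclideanSpace ℝ (Fin n)) (c : Fin n ×ₗ Fin p) (S : Finset (ZMod p)) : Prop where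
  nonempty : S.Nonempty
  card_eq : S.card = (ofLex c).2
  gap : ∀ k ∈ S, ∀ l ∉ S, orbitCoord p h x (ofLex c).1 l + η < orbitCoord p h x (ofLex c).1 k

lemma IsPeak.unique (hη : 0 ≤ η) (hS : IsPeak h η x c S) (hS' : IsPeak h η x c S') : S = S' := by
  have hcard : S.card = S'.card := hS.card_eq.trans hS'.card_eq.symm
  by_contra hne
  obtain ⟨k, hk, hk'⟩ := Finset.not_subset.1 fun hsub ↦
    hne (Finset.eq_of_subset_of_card_le hsub hcard.ge)
  obtain ⟨l, hl, hl'⟩ := Finset.not_subset.1 fun hsub ↦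
    hne (Finset.eq_of_subset_of_card_le hsub hcard.le).symm
  linarith [hS.gap k hk l hl', hS'.gap l hl k hk']

lemma IsPeak.mono (hη : η' ≤ η) (hS : IsPeak h η x c S) : IsPeak h η' x c S :=
  ⟨hS.nonempty, hS.card_eq, fun k hk l hl ↦ by linarith [hS.gap k hk l hl]⟩

lemma IsPeak.of_dist_lt [NeZero p] {δ : ℝ} (hxy : ∀ i < p, dist (h^[i] x) (h^[i] y) < δ)
    (hη : η' + 2 * δ ≤ η) (hS : IsPeak h η x c S) : IsPeak h η' y c S := by
  refine ⟨hS.nonempty, hS.card_eq, fun k hk l hl ↦ ?_⟩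
  have hcoord (m : ZMod p) :
      |orbitCoord p h x (ofLex c).1 m - orbitCoord p h y (ofLex c).1 m| < δ := by
    refine lt_of_le_of_lt ?_ (hxy m.val m.val_lt)
    rw [dist_eq_norm]
    exact PiLp.norm_apply_le (h^[m.val] x - h^[m.val] y) _
  linarith [hS.gap k hk l hl, abs_lt.1 (hcoord k), abs_lt.1 (hcoord l)]

lemma orbitCoord_map [Fact p.Prime] (hh : h^[p] = id) (i : Fin n) (k : ZMod p) :
    orbitCoord p h (h x) i k = orbitCoord p h x i (k + 1) := by
  have hper : Function.IsPeriodicPt h p x := congrFun hh x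
  rw [orbitCoord, orbitCoord, ← Function.iterate_succ_apply, ZMod.val_add, ZMod.val_one,
    hper.iterate_mod_apply]

lemma IsPeak.map [Fact p.Prime] (hh : h^[p] = id) (hS : IsPeak h η x c S) :
    IsPeak h η (h x) c (S.map (Equiv.subRight 1).toEmbedding) := by
  have hmem (k : ZMod p) : k ∈ S.map (Equiv.subRight 1).toEmbedding ↔ k + 1 ∈ S := by
    rw [Finset.mem_map_equiv]
    rfl
  refine ⟨hS.nonempty.map, (S.card_map _).trans hS.card_eq, fun k hk l hl ↦ ?_⟩
  rw [orbitCoord_map hh, orbitCoord_map hh]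
  exact hS.gap _ ((hmem k).1 hk) _ (mt (hmem l).2 hl)

lemma IsPeak.map_ne [NeZero p] (hη : 0 ≤ η) (hS : IsPeak h η x c S) : h x ≠ x := by
  intro hx
  obtain ⟨k, hk⟩ := hS.nonempty
  obtain ⟨l, hl⟩ : ∃ l, l ∉ S := by
    by_contra! hall
    have hcard := hS.card_eq
    rw [Finset.eq_univ_of_forall hall, Finset.card_univ, ZMod.card] at hcard
    exact ((ofLex c).2.2.trans_eq hcard).false
  have hgap := hS.gap k hk l hl
  simp only [orbitCoord, Function.iterate_fixed hx] at hgap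
  linarith

/-- The colours for which the orbit of `x` has a peak of height more than `η`. -/
def colours (h : EuclideanSpace ℝ (Fin n) → EuclideanSpace ℝ (Fin n)) (η : ℝ)
    (x : EuclideanSpace ℝ (Fin n)) : Set (Fin n ×ₗ Fin p) :=
  {c | ∃ S, IsPeak h η x c S}

lemma colours_anti (hη : η' ≤ η) : (colours h η x : Set (Fin n ×ₗ Fin p)) ⊆ colours h η' x :=
  fun _ ⟨S, hS⟩ ↦ ⟨S, hS.mono hη⟩

lemma not_nonempty_colours_of_fixed [NeZero p] (hη : 0 ≤ η) (hx : h x = x) :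
    ¬(colours h η x : Set (Fin n ×ₗ Fin p)).Nonempty :=
  fun ⟨_, _, hS⟩ ↦ hS.map_ne hη hx

lemma colours_map [Fact p.Prime] (hh : h^[p] = id) (η : ℝ) (x : EuclideanSpace ℝ (Fin n)) :
    (colours h η (h x) : Set (Fin n ×ₗ Fin p)) = colours h η x := by
  have hsub (y) : (colours h η y : Set (Fin n ×ₗ Fin p)) ⊆ colours h η (h y) :=
    fun _ ⟨_, hS⟩ ↦ ⟨_, hS.map hh⟩
  have hiter (i : ℕ) : (colours h η (h x) : Set (Fin n ×ₗ Fin p)) ⊆ colours h η (h^[i] (h x)) := by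
    induction i with
    | zero => rfl
    | succ i ih =>
      rw [Function.iterate_succ_apply']
      exact ih.trans (hsub _)
  refine ((hiter (p - 1)).trans_eq ?_).antisymm (hsub x)
  rw [← Function.iterate_succ_apply, Nat.succ_eq_add_one,
    Nat.sub_add_cancel (Fact.out : p.Prime).one_le, hh, id]

-- The times at which a nonconstant coordinate of the orbit is maximal form a peak.
lemma exists_nonempty_colours [Fact p.Prime] (hx : h x ≠ x) :
    ∃ η > 0, (colours h η x : Set (Fin n ×ₗ Fin p)).Nonempty := by
  obtain ⟨i, hi⟩ : ∃ i, h x i ≠ x i := by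
    by_contra! hall
    exact hx (by ext i; exact hall i)
  obtain ⟨k₀, hk₀⟩ := exists_eq_ciSup_of_finite (f := orbitCoord p h x i)
  set u := orbitCoord p h x i with hu
  have hmax (k) : u k ≤ u k₀ := hk₀ ▸ le_ciSup (Set.finite_range u).bddAbove k
  set S : Finset (ZMod p) := {k | u k = u k₀}
  have hmemS (k) : k ∈ S ↔ u k = u k₀ := by simp [S]
  obtain ⟨l₁, hl₁⟩ : ∃ l, l ∉ S := by
    by_contra! hall
    refine hi ?_
    have h01 := ((hmemS 1).1 (hall 1)).trans ((hmemS 0).1 (hall 0)).symm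
    simpa [hu, orbitCoord, ZMod.val_one] using h01
  obtain ⟨l₀, hl₀, hl₀max⟩ := Finset.exists_max_image Sᶜ u ⟨l₁, Finset.mem_compl.2 hl₁⟩
  have hlt : u l₀ < u k₀ := (hmax l₀).lt_of_ne (by simpa [S] using hl₀)
  have hcard : S.card < p := by
    simpa [ZMod.card] using Finset.card_lt_univ_of_notMem hl₁
  refine ⟨(u k₀ - u l₀) / 2, by linarith, toLex (i, ⟨S.card, hcard⟩), S,
    ⟨k₀, (hmemS k₀).2 rfl⟩, rfl, fun k hk l hl ↦ ?_⟩
  change u l + _ < u k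
  linarith [(hmemS k).1 hk, hl₀max l (Finset.mem_compl.2 hl)]

lemma exists_forall_nonempty_colours [Fact p.Prime] (hc : Continuous h)
    {K : Set (EuclideanSpace ℝ (Fin n))} (hK : IsCompact K) (hfix : ∀ x ∈ K, h x ≠ x) :
    ∃ η > 0, ∀ x ∈ K, (colours h η x : Set (Fin n ×ₗ Fin p)).Nonempty := by
  refine hK.induction_on ⟨1, one_pos, by simp⟩ ?_ ?_ fun x hx ↦ ?_
  · rintro s t hst ⟨η, hη, ht⟩
    exact ⟨η, hη, fun x hx ↦ ht x (hst hx)⟩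
  · rintro s t ⟨η, hη, hs⟩ ⟨η', hη', ht⟩
    refine ⟨min η η', lt_min hη hη', ?_⟩
    rintro x (hx | hx)
    · exact (hs x hx).mono (colours_anti (min_le_left _ _))
    · exact (ht x hx).mono (colours_anti (min_le_right _ _))
  · obtain ⟨η, hη, c, S, hS⟩ := exists_nonempty_colours (p := p) (hfix x hx)
    have hnear : ∀ᶠ y in nhds x, ∀ i < p, dist (h^[i] x) (h^[i] y) < η / 4 := by
      refine (Filter.eventually_all_finite (Set.finite_lt_nat p)).2 fun i _ ↦ ?_
      have hball := (hc.iterate i).continuousAt (Metric.ball_mem_nhds (h^[i] x)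
        (by positivity : 0 < η / 4))
      filter_upwards [hball] with y hy
      rwa [dist_comm]
    exact ⟨_, mem_nhdsWithin_of_mem_nhds hnear, η / 2, half_pos hη,
      fun y hy ↦ ⟨c, S, hS.of_dist_lt hy (by linarith)⟩⟩

/-- The set of times of the peak of colour `c` (a junk value if there is none). -/
noncomputable def peak (h : EuclideanSpace ℝ (Fin n) → EuclideanSpace ℝ (Fin n)) (η : ℝ)
    (x : EuclideanSpace ℝ (Fin n)) (c : Fin n ×ₗ Fin p) : Finset (ZMod p) :=
  Classical.epsilon (IsPeak h η x c)

lemma isPeak_peak (hcx : c ∈ colours h η x) : IsPeak h η x c (peak h η x c) :=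
  Classical.epsilon_spec hcx

/-- Minus the mean of the times of the peak of colour `c`, an element of `ZMod p` which increases
by one when `h` is applied. -/
noncomputable def phase (h : EuclideanSpace ℝ (Fin n) → EuclideanSpace ℝ (Fin n)) (η : ℝ)
    (x : EuclideanSpace ℝ (Fin n)) (c : Fin n ×ₗ Fin p) : ZMod p :=
  -(((peak h η x c).card : ZMod p)⁻¹ * ∑ k ∈ peak h η x c, k)

lemma phase_map [Fact p.Prime] (hh : h^[p] = id) (hη : 0 ≤ η) (hcx : c ∈ colours h η x) :
    phase h η (h x) c = phase h η x c + 1 := by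
  have hS := isPeak_peak hcx
  have hpeak : peak h η (h x) c = (peak h η x c).map (Equiv.subRight 1).toEmbedding :=
    (isPeak_peak ⟨_, hS.map hh⟩).unique hη (hS.map hh)
  have hcard : ((peak h η x c).card : ZMod p) ≠ 0 := by
    rw [Ne, ZMod.natCast_eq_zero_iff]
    exact Nat.not_dvd_of_pos_of_lt hS.nonempty.card_pos (hS.card_eq ▸ (ofLex c).2.2)
  simp only [phase, hpeak, Finset.card_map, Finset.sum_map, Equiv.coe_toEmbedding,
    Equiv.subRight_apply, Finset.sum_sub_distrib, Finset.sum_const, nsmul_one]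
  field_simp
  ring

open Classical in
/-- The label of `x`: a colour of `x` with its phase if there is one, and otherwise the fixed vertex
recording the sign of `f x`. -/
noncomputable def label (h : EuclideanSpace ℝ (Fin n) → EuclideanSpace ℝ (Fin n))
    (f : EuclideanSpace ℝ (Fin n) → ℝ) (η : ℝ) (x : EuclideanSpace ℝ (Fin n)) :
    Vertex p (Fin n ×ₗ Fin p) :=
  if H : (colours h η x).Nonempty then .inl (H.some, phase h η x H.some)
  else .inr (decide (0 ≤ f x))

variable {f : EuclideanSpace ℝ (Fin n) → ℝ}

lemma label_of_not_nonempty (H : ¬(colours h η x : Set (Fin n ×ₗ Fin p)).Nonempty) :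
    (label h f η x : Vertex p (Fin n ×ₗ Fin p)) = .inr (decide (0 ≤ f x)) :=
  dif_neg H

lemma semiconj_label [Fact p.Prime] (hh : h^[p] = id) (hf : ∀ x, f (h x) = f x) (hη : 0 ≤ η) :
    Function.Semiconj (label h f η : _ → Vertex p (Fin n ×ₗ Fin p)) h (shift 1) := by
  intro x
  by_cases H : (colours h η x : Set (Fin n ×ₗ Fin p)).Nonempty
  · have H' : (colours h η (h x) : Set (Fin n ×ₗ Fin p)).Nonempty := by rwa [colours_map hh]
    rw [label, label, dif_pos H', dif_pos H]
    simp only [colours_map hh, phase_map hh hη H.some_mem]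
    rfl
  · rw [label_of_not_nonempty H, label_of_not_nonempty (by rwa [colours_map hh]), hf]
    rfl

end Peak

section Labelling

variable {p n : ℕ} [Fact p.Prime] {h : EuclideanSpace ℝ (Fin n) → EuclideanSpace ℝ (Fin n)}
  {B : Set Bool} {f : EuclideanSpace ℝ (Fin n) → ℝ} {η δ : ℝ} {x y : EuclideanSpace ℝ (Fin n)}

-- A change of sign along the segment from `x` to `y` would produce a zero of `f`, hence a peak at
-- `x`.
lemma nonneg_of_nonneg_of_not_nonempty_colours (hfc : Continuous f)
    (hpeak : ∀ z ∈ segment ℝ x y, f z = 0 → (colours h (2 * η) z : Set (Fin n ×ₗ Fin p)).Nonempty)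
    (hδ : ∀ z ∈ segment ℝ x y, ∀ i < p, dist (h^[i] z) (h^[i] x) < η / 2)
    (hx : ¬(colours h η x : Set (Fin n ×ₗ Fin p)).Nonempty) (hy : 0 ≤ f y) : 0 ≤ f x := by
  by_contra! hneg
  obtain ⟨z, hz, hz0⟩ := (convex_segment x y).isPreconnected.intermediate_value
    (left_mem_segment ℝ x y) (right_mem_segment ℝ x y) hfc.continuousOn ⟨hneg.le, hy⟩
  obtain ⟨c, S, hS⟩ := hpeak z hz hz0
  exact hx ⟨c, S, hS.of_dist_lt (hδ z hz) (by linarith)⟩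

lemma phase_eq_of_dist_lt {c : Fin n ×ₗ Fin p} (hη : 0 ≤ η)
    (hxy : ∀ i < p, dist (h^[i] x) (h^[i] y) < η / 2) (hcx : c ∈ colours h η x)
    (hcy : c ∈ colours h η y) : phase h η x c = phase h η y c := by
  rw [phase, phase, ((isPeak_peak hcx).of_dist_lt hxy (by linarith)).unique le_rfl
    ((isPeak_peak hcy).mono hη)]

lemma compatible_label (hfc : Continuous f) (hB : ∀ x, f x ≠ 0 → decide (0 ≤ f x) ∈ B)
    (hη : 0 ≤ η)
    (hpeak : ∀ z ∈ segment ℝ x y, f z = 0 → (colours h (2 * η) z : Set (Fin n ×ₗ Fin p)).Nonempty)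
    (hδ : ∀ z ∈ segment ℝ x y, ∀ w ∈ segment ℝ x y, ∀ i < p, dist (h^[i] z) (h^[i] w) < η / 2) :
    Compatible (p := p) B (label h f η x) (label h f η y) := by
  have hxs := left_mem_segment ℝ x y
  have hys := right_mem_segment ℝ x y
  by_cases hx : (colours h η x : Set (Fin n ×ₗ Fin p)).Nonempty <;>
    by_cases hy : (colours h η y : Set (Fin n ×ₗ Fin p)).Nonempty
  · rw [label, label, dif_pos hx, dif_pos hy]
    intro hxy
    rw [hxy]
    exact phase_eq_of_dist_lt hη (hδ x hxs y hys) (hxy ▸ hx.some_mem) hy.some_mem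
  · rw [label, label, dif_pos hx, dif_neg hy]
    trivial
  · rw [label, label, dif_neg hx, dif_pos hy]
    trivial
  · rw [label_of_not_nonempty hx, label_of_not_nonempty hy]
    refine ⟨decide_eq_decide.2 ⟨fun h0 ↦ ?_, fun h0 ↦ ?_⟩, hB x fun hx0 ↦
      hx ((hpeak x hxs hx0).mono (colours_anti (by linarith)))⟩
    · rw [segment_symm] at hpeak hδ hys
      exact nonneg_of_nonneg_of_not_nonempty_colours hfc hpeak (fun z hz ↦ hδ z hz y hys) hy h0
    · exact nonneg_of_nonneg_of_not_nonempty_colours hfc hpeak (fun z hz ↦ hδ z hz x hxs) hx h0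

lemma exists_isLabelling (hc : Continuous h) (hh : h^[p] = id) (hfc : Continuous f)
    (hf : ∀ x, f (h x) = f x) (hf0 : ∀ x, h x = x → f x ≠ 0)
    (hB : ∀ x, f x ≠ 0 → decide (0 ≤ f x) ∈ B) (ρ : ℝ) :
    ∃ ε > 0, ∃ L : EuclideanSpace ℝ (Fin n) → Vertex p (Fin n ×ₗ Fin p),
      IsLabelling h B ε ρ L ∧ ∀ x, h x = x → L x = .inr (decide (0 ≤ f x)) := by
  have hK : IsCompact (Metric.closedBall (0 : EuclideanSpace ℝ (Fin n)) ρ ∩ {x | f x = 0}) :=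
    (isCompact_closedBall _ _).inter_right (isClosed_eq hfc continuous_const)
  obtain ⟨η', hη', hpeak⟩ := exists_forall_nonempty_colours (p := p) hc hK
    fun x hx hfix ↦ hf0 x hfix hx.2
  obtain ⟨η, rfl⟩ : ∃ η, η' = 2 * η := ⟨η' / 2, by ring⟩
  have hη : 0 < η := by linarith
  obtain ⟨ε, hε, hdist⟩ := exists_dist_iterate_lt hc p ρ (half_pos hη)
  refine ⟨ε, hε, label h f η, ⟨semiconj_label hh hf hη.le, ?_⟩, fun x hx ↦
    label_of_not_nonempty (not_nonempty_colours_of_fixed hη.le hx)⟩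
  rintro k v hv _ ⟨i, rfl⟩ _ ⟨j, rfl⟩
  have hseg : segment ℝ (v i) (v j) ⊆ Metric.closedBall 0 ρ :=
    (convex_closedBall _ _).segment_subset (by simpa using hv.1 i) (by simpa using hv.1 j)
  refine compatible_label hfc hB hη.le (fun z hz h0 ↦ hpeak z ⟨hseg hz, h0⟩) fun z hz w hw ↦
    hdist z w (by simpa using hseg hz) (by simpa using hseg hw) ?_
  calc dist z w ≤ Metric.diam (segment ℝ (v i) (v j)) :=
        Metric.dist_le_diam_of_mem (Metric.isBounded_closedBall.subset hseg) hz hw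
    _ = dist (v i) (v j) := by
        rw [← convexHull_pair, convexHull_diam, Metric.diam_pair]
    _ < ε := hv.2 i j

end Labelling

/-! ### Smith's theorem -/

section Fixed

variable {p : ℕ} [Fact p.Prime] {n : ℕ} {h : EuclideanSpace ℝ (Fin n) → EuclideanSpace ℝ (Fin n)}

lemma zmod_two_ne_zero (hp2 : p ≠ 2) : (2 : ZMod p) ≠ 0 :=
  Ring.two_ne_zero (by rwa [ZMod.ringChar_zmod_n])

theorem nonempty_fixedPoints (hp2 : p ≠ 2) (hc : Continuous h) (hh : h^[p] = id) :
    (Function.fixedPoints h).Nonempty := by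
  by_contra hempty
  have hfix (x) : h x ≠ x := fun hx ↦ hempty ⟨x, hx⟩
  obtain ⟨ρ, hρ⟩ := smithCocycle_one.exists_forall_not_isLabelling (zmod_two_ne_zero hp2)
    (Fact.out : p.Prime).one_lt hc hh (isDetected_one (ι := Fin n ×ₗ Fin p))
  obtain ⟨ε, hε, L, hL, -⟩ := exists_isLabelling (f := 0) hc hh continuous_const
    (fun _ ↦ rfl) (fun x hx ↦ (hfix x hx).elim) (fun x hx ↦ (hx rfl).elim) ρ
  exact hρ ε hε L trivial hL

lemma exists_invariant_separating {X : Type*} [TopologicalSpace X] [NormalSpace X] {p : ℕ}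
    (hp : p ≠ 0) {h : X → X} (hc : Continuous h) (hh : h^[p] = id) {A B : Set X} (hA : IsClosed A)
    (hB : IsClosed B) (hAB : Disjoint A B) :
    ∃ f : X → ℝ, Continuous f ∧ (∀ x, f (h x) = f x) ∧
      ∀ x, h x = x → (x ∈ A → f x < 0) ∧ (x ∈ B → 0 < f x) := by
  obtain ⟨g, hgA, hgB, -⟩ := exists_continuous_zero_one_of_isClosed hA hB hAB
  have hp0 : (0 : ℝ) < p := Nat.cast_pos.2 (Nat.pos_of_ne_zero hp)
  have hfix (x) (hx : h x = x) :
      ∑ k ∈ Finset.range p, (g (h^[k] x) - 1 / 2) = p * (g x - 1 / 2) := by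
    simp [Function.iterate_fixed hx, mul_sub]
  refine ⟨fun x ↦ ∑ k ∈ Finset.range p, (g (h^[k] x) - 1 / 2), ?_, fun x ↦ ?_,
    fun x hx ↦ ⟨fun hxA ↦ ?_, fun hxB ↦ ?_⟩⟩
  · exact continuous_finsetSum _ fun k _ ↦ (g.continuous.comp (hc.iterate k)).sub continuous_const
  · have hcycle := Finset.sum_range_succ' (fun k ↦ g (h^[k] x) - 1 / 2) p
    rw [Finset.sum_range_succ, hh] at hcycle
    exact (add_right_cancel hcycle).symm
  · simp only [hfix x hx, hgA hxA, Pi.zero_apply]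
    linarith
  · simp only [hfix x hx, hgB hxB, Pi.one_apply]
    linarith

theorem isPreconnected_fixedPoints (hp2 : p ≠ 2) (hc : Continuous h) (hh : h^[p] = id) :
    IsPreconnected (Function.fixedPoints h) := by
  rw [isPreconnected_iff_subset_of_fully_disjoint_closed (isClosed_fixedPoints hc)]
  intro A B hA hB hcover hAB
  by_contra! hsub
  obtain ⟨x, hx, hxA⟩ := Set.not_subset.1 hsub.2
  obtain ⟨y, hy, hyB⟩ := Set.not_subset.1 hsub.1
  replace hxA := (hcover hx).resolve_right hxA
  replace hyB := (hcover hy).resolve_left hyB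
  obtain ⟨f, hfc, hf, hfAB⟩ := exists_invariant_separating (Fact.out : p.Prime).ne_zero hc hh
    hA hB hAB
  obtain ⟨ρ, hρ⟩ := smithCocycle_coboundary_fixedIndicator.exists_forall_not_isLabelling
    (zmod_two_ne_zero hp2) (Fact.out : p.Prime).one_lt hc hh
    (isDetected_coboundary_fixedIndicator (ι := Fin n ×ₗ Fin p) hx hy)
  obtain ⟨ε, hε, L, hL, hLfix⟩ := exists_isLabelling hc hh hfc hf
    (fun z hz ↦ (hcover hz).elim (fun hzA ↦ ((hfAB z hz).1 hzA).ne)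
      fun hzB ↦ ((hfAB z hz).2 hzB).ne') (fun _ _ ↦ Set.mem_univ _) ρ
  refine hρ ε hε L ⟨?_, ?_⟩ hL
  · rw [hLfix x hx, decide_eq_false ((hfAB x hx).1 hxA).not_ge]
  · rw [hLfix y hy, decide_eq_true ((hfAB y hy).2 hyB).le]

end Fixed

/-! ### Eigenvalues of periodic endomorphisms -/

section Spectrum

lemma pow_natCast_val {M : Type*} [Monoid M] {N : ℕ} {x : M} (hx : x ^ N = 1) (k : ℕ) :
    x ^ (k : ZMod N).val = x ^ k := by
  rw [ZMod.val_natCast, ← pow_eq_pow_mod k hx]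

lemma pow_val_add_one {M : Type*} [Monoid M] {N : ℕ} [NeZero N] {x : M} (hx : x ^ N = 1)
    (j : ZMod N) : x ^ (j + 1).val = x * x ^ j.val := by
  rw [← pow_succ', ← pow_natCast_val hx (j.val + 1), Nat.cast_succ, ZMod.natCast_zmod_val]

lemma pow_val_mul {M : Type*} [Monoid M] {N : ℕ} {x : M} (hx : x ^ N = 1) (i j : ZMod N) :
    x ^ (i * j).val = (x ^ i.val) ^ j.val := by
  rw [ZMod.val_mul, ← pow_eq_pow_mod _ hx, pow_mul]

section Complex

variable {N : ℕ} [NeZero N] {V : Type*} [AddCommGroup V] [Module ℂ V] {f : Module.End ℂ V}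

/-- The projector onto the eigenspace of an endomorphism of period `N` for the root of unity
`ZMod.stdAddChar a`, as a polynomial in the endomorphism. -/
noncomputable def eigenprojector (f : Module.End ℂ V) (a : ZMod N) : Module.End ℂ V :=
  (N : ℂ)⁻¹ • ∑ j : ZMod N, ZMod.stdAddChar (-(a * j)) • f ^ j.val

lemma pow_apply_of_mem_eigenspace {μ : ℂ} {v : V} (hv : v ∈ f.eigenspace μ) (k : ℕ) :
    (f ^ k) v = μ ^ k • v := by
  induction k with
  | zero => simp
  | succ k ih => rw [pow_succ', Module.End.mul_apply, ih, map_smul,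
      Module.End.mem_eigenspace_iff.1 hv, smul_smul, ← pow_succ]

lemma stdAddChar_pow (a : ZMod N) (k : ℕ) :
    (ZMod.stdAddChar a : ℂ) ^ k = ZMod.stdAddChar (a * (k : ZMod N)) := by
  rw [← AddChar.map_nsmul_eq_pow, nsmul_eq_mul, mul_comm]

lemma isProj_eigenprojector (hf : f ^ N = 1) (a : ZMod N) :
    LinearMap.IsProj (f.eigenspace (ZMod.stdAddChar a)) (eigenprojector f a) where
  map_mem v := by
    rw [Module.End.mem_eigenspace_iff, ← Module.End.mul_apply, ← LinearMap.smul_apply]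
    congr 1
    rw [eigenprojector, mul_smul_comm, smul_comm (ZMod.stdAddChar a : ℂ)]
    congr 1
    rw [Finset.mul_sum, Finset.smul_sum, ← Equiv.sum_comp (Equiv.addRight (1 : ZMod N))
      fun j ↦ (ZMod.stdAddChar a : ℂ) • (ZMod.stdAddChar (-(a * j)) : ℂ) • f ^ j.val]
    refine Finset.sum_congr rfl fun j _ ↦ ?_
    rw [Equiv.coe_addRight, pow_val_add_one hf, mul_smul_comm, smul_smul,
      ← AddChar.map_add_eq_mul]
    congr 2
    ring
  map_id v hv := by
    have hterm (j : ZMod N) :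
        ((ZMod.stdAddChar (-(a * j)) : ℂ) • f ^ j.val) v = v := by
      rw [LinearMap.smul_apply, pow_apply_of_mem_eigenspace hv, stdAddChar_pow,
        ZMod.natCast_zmod_val, smul_smul, ← AddChar.map_add_eq_mul, neg_add_cancel,
        AddChar.map_zero_eq_one, one_smul]
    rw [eigenprojector, LinearMap.smul_apply, LinearMap.sum_apply, Finset.sum_congr rfl
      fun j _ ↦ hterm j, Finset.sum_const, Finset.card_univ, ZMod.card,
      ← Nat.cast_smul_eq_nsmul ℂ, smul_smul, inv_mul_cancel₀ (NeZero.ne _), one_smul]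

lemma finrank_eigenspace_stdAddChar [FiniteDimensional ℂ V] (hf : f ^ N = 1) (a : ZMod N) :
    (Module.finrank ℂ (f.eigenspace (ZMod.stdAddChar a)) : ℂ) =
      (N : ℂ)⁻¹ * ∑ j : ZMod N, ZMod.stdAddChar (-(a * j)) * LinearMap.trace ℂ V (f ^ j.val) := by
  rw [← (isProj_eigenprojector hf a).trace, eigenprojector, map_smul, map_sum]
  simp only [map_smul, smul_eq_mul]

end Complex

section Real

variable {N : ℕ} [NeZero N] {V : Type*} [AddCommGroup V] [Module ℝ V] [FiniteDimensional ℝ V]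
  {A B G : Module.End ℝ V}

/-- The multiplicity of the root of unity `ZMod.stdAddChar a` as an eigenvalue of the
complexification of a real endomorphism. -/
noncomputable def eigenMultiplicity (A : Module.End ℝ V) (a : ZMod N) : ℕ :=
  Module.finrank ℂ (Module.End.eigenspace (A.baseChange ℂ) (ZMod.stdAddChar a))

lemma eigenMultiplicity_eq (hA : A ^ N = 1) (a : ZMod N) : (eigenMultiplicity A a : ℂ) =
    (N : ℂ)⁻¹ * ∑ j : ZMod N, ZMod.stdAddChar (-(a * j)) *
      (LinearMap.trace ℝ V (A ^ j.val) : ℂ) := by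
  have hA' : A.baseChange ℂ ^ N = 1 := by
    rw [← LinearMap.baseChange_pow, hA, LinearMap.baseChange_one]
  rw [eigenMultiplicity, finrank_eigenspace_stdAddChar hA']
  simp only [← LinearMap.baseChange_pow, LinearMap.trace_baseChange, Complex.coe_algebraMap]

lemma sum_eigenMultiplicity (hA : A ^ N = 1) :
    ∑ a : ZMod N, eigenMultiplicity A a = Module.finrank ℝ V := by
  have orthogonality (j : ZMod N) :
      ∑ a : ZMod N, (ZMod.stdAddChar (-(a * j)) : ℂ) = if j = 0 then (N : ℂ) else 0 := by
    simpa [ZMod.card] using AddChar.sum_mulShift (-j) (ZMod.isPrimitive_stdAddChar N)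
  have : (∑ a : ZMod N, eigenMultiplicity A a : ℂ) = Module.finrank ℝ V := by
    simp only [eigenMultiplicity_eq hA, ← Finset.mul_sum]
    rw [Finset.sum_comm]
    simp only [← Finset.sum_mul, orthogonality]
    simp [NeZero.ne N]
  exact_mod_cast this

lemma eigenMultiplicity_neg (hA : A ^ N = 1) (a : ZMod N) :
    eigenMultiplicity A (-a) = eigenMultiplicity A a := by
  have : (eigenMultiplicity A (-a) : ℂ) = (starRingEnd ℂ) (eigenMultiplicity A a) := by
    simp only [eigenMultiplicity_eq hA, map_mul, map_sum, map_inv₀, Complex.conj_natCast,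
      Complex.conj_ofReal, ← AddChar.map_neg_eq_conj, neg_mul]
  simpa using this

lemma eigenMultiplicity_zero_eq_finrank (hA : A ^ N = 1)
    (h : ∀ a : ZMod N, a ≠ 0 → eigenMultiplicity A a = 0) :
    eigenMultiplicity A (0 : ZMod N) = Module.finrank ℝ V := by
  rw [← sum_eigenMultiplicity hA, Finset.sum_eq_single 0 (fun a _ ↦ h a) (by simp)]

lemma eq_one_of_eigenMultiplicity (hA : A ^ N = 1)
    (h : ∀ a : ZMod N, a ≠ 0 → eigenMultiplicity A a = 0) : A = 1 := by
  have htop : Module.End.eigenspace (A.baseChange ℂ) (ZMod.stdAddChar (0 : ZMod N)) = ⊤ :=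
    Submodule.eq_top_of_finrank_eq
      ((eigenMultiplicity_zero_eq_finrank hA h).trans Module.finrank_baseChange.symm)
  ext v
  apply Module.FaithfullyFlat.tensorProduct_mk_injective (A := ℝ) (B := ℂ) V
  have := Module.End.mem_eigenspace_iff.1 (htop ▸ Submodule.mem_top : (1 : ℂ) ⊗ₜ[ℝ] v ∈ _)
  simpa using this

lemma eq_zero_of_eigenMultiplicity_zero (h : eigenMultiplicity A (0 : ZMod N) = 0) {v : V}
    (hv : A v = v) : v = 0 := by
  have hbot := Submodule.finrank_eq_zero.1 h
  have hmem : (1 : ℂ) ⊗ₜ[ℝ] v ∈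
      Module.End.eigenspace (A.baseChange ℂ) (ZMod.stdAddChar (0 : ZMod N)) :=
    Module.End.mem_eigenspace_iff.2 (by simp [hv])
  rw [hbot, Submodule.mem_bot] at hmem
  exact Module.FaithfullyFlat.tensorProduct_mk_injective (A := ℝ) (B := ℂ) V (by simpa using hmem)

omit [FiniteDimensional ℝ V] in
lemma trace_pow_eq_of_mul_eq (hG : IsUnit G) (hGA : G * A = B * G) (k : ℕ) :
    LinearMap.trace ℝ V (A ^ k) = LinearMap.trace ℝ V (B ^ k) := by
  obtain ⟨u, rfl⟩ := hG
  have hconj : A ^ k = u⁻¹ * (B ^ k * u) := by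
    rw [← (show SemiconjBy (u : Module.End ℝ V) A B from hGA).pow_right k,
      Units.inv_mul_cancel_left]
  rw [hconj, LinearMap.trace_mul_comm, mul_assoc, Units.mul_inv, mul_one]

lemma eigenMultiplicity_mul_of_conj {p : ℕ} [Fact p.Prime] (hA : A ^ p = 1) (hB : B ^ p = 1)
    (hG : IsUnit G) {s : ZMod p} (hs : s ≠ 0) (hGA : G * A = B ^ s.val * G) (a : ZMod p) :
    eigenMultiplicity A (a * s) = eigenMultiplicity B a := by
  have : (eigenMultiplicity A (a * s) : ℂ) = eigenMultiplicity B a := by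
    rw [eigenMultiplicity_eq hA, eigenMultiplicity_eq hB, ← Equiv.sum_comp (Equiv.mulLeft₀ s hs)
      fun j ↦ ZMod.stdAddChar (-(a * j)) * (LinearMap.trace ℝ V (B ^ j.val) : ℂ)]
    simp only [Equiv.mulLeft₀_apply, pow_val_mul hB, trace_pow_eq_of_mul_eq hG hGA, mul_assoc]
  exact_mod_cast this

end Real

section CyclicOrbit

variable {V : Type*} [AddCommGroup V]

lemma det_of_cyclic_basis {R : Type*} [CommRing R] [Module R V] {m : ℕ}
    (b : Module.Basis (Fin (m + 1)) R V) {g : Module.End R V} (hg : ∀ i, g (b i) = b (i + 1)) :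
    LinearMap.det g = (-1) ^ m := by
  have hcomp : g ∘ b = b ∘ finRotate (m + 1) := by
    ext i
    rw [Function.comp_apply, Function.comp_apply, hg, finRotate_apply]
  have hdet := b.det_comp g b
  rw [hcomp, AlternatingMap.map_perm, b.det_self, sign_finRotate, mul_one] at hdet
  rw [← hdet]
  simp [Units.smul_def]

lemma pow_apply_mem_eigenspace {N : ℕ} [NeZero N] [Module ℂ V] {f g : Module.End ℂ V} {k : ℕ}
    (hfg : f * g = g * f ^ k) {a : ZMod N} {v : V}
    (hv : v ∈ f.eigenspace (ZMod.stdAddChar a)) (i : ℕ) :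
    (g ^ i) v ∈ f.eigenspace (ZMod.stdAddChar (a * (k : ZMod N) ^ i)) := by
  induction i with
  | zero => simpa using hv
  | succ i ih =>
    rw [Module.End.mem_eigenspace_iff, pow_succ', Module.End.mul_apply, ← Module.End.mul_apply,
      hfg, Module.End.mul_apply, pow_apply_of_mem_eigenspace ih, stdAddChar_pow, map_smul,
      pow_succ, mul_assoc]

lemma linearIndependent_pow_apply {N m : ℕ} [NeZero N] [Module ℂ V] {f g : Module.End ℂ V} {k : ℕ}
    (hfg : f * g = g * f ^ k) (hg : g ^ m = 1) {a : ZMod N} {v : V} (hv0 : v ≠ 0)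
    (hv : v ∈ f.eigenspace (ZMod.stdAddChar a))
    (hinj : Set.InjOn (fun i : ℕ ↦ a * (k : ZMod N) ^ i) (Set.Iio m)) :
    LinearIndependent ℂ fun i : Fin m ↦ (g ^ (i : ℕ)) v := by
  refine Module.End.eigenvectors_linearIndependent' f
    (fun i : Fin m ↦ ZMod.stdAddChar (a * (k : ZMod N) ^ (i : ℕ)))
    (fun i j hij ↦ Fin.ext (hinj i.2 j.2 (ZMod.injective_stdAddChar hij))) _
    fun i ↦ ⟨pow_apply_mem_eigenspace hfg hv i, fun h0 ↦ hv0 ?_⟩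
  rw [← Module.End.one_apply (R := ℂ) v, ← hg, ← Nat.sub_add_cancel i.2.le, pow_add,
    Module.End.mul_apply, h0, map_zero]

lemma det_eq_neg_one_of_permutes_eigenvalues {N : ℕ} [NeZero N] [Module ℝ V]
    [FiniteDimensional ℝ V] {A G : Module.End ℝ V} {k m : ℕ} (hm : Odd m)
    (hV : Module.finrank ℝ V = m + 1) (hAG : A * G = G * A ^ k) (hG : G ^ (m + 1) = 1) {a : ZMod N}
    (ha : eigenMultiplicity A a ≠ 0)
    (hinj : Set.InjOn (fun i : ℕ ↦ a * (k : ZMod N) ^ i) (Set.Iio (m + 1))) :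
    LinearMap.det G = -1 := by
  obtain ⟨v, hv, hv0⟩ := Submodule.exists_mem_ne_zero_of_ne_bot
    (mt Submodule.finrank_eq_zero.2 ha)
  have hAG' : A.baseChange ℂ * G.baseChange ℂ = G.baseChange ℂ * A.baseChange ℂ ^ k := by
    rw [← LinearMap.baseChange_pow, ← LinearMap.baseChange_mul, hAG, LinearMap.baseChange_mul]
  have hG' : G.baseChange ℂ ^ (m + 1) = 1 := by
    rw [← LinearMap.baseChange_pow, hG, LinearMap.baseChange_one]
  let b := basisOfLinearIndependentOfCardEqFinrank
    (linearIndependent_pow_apply hAG' hG' hv0 hv hinj)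
    (by rw [Fintype.card_fin, Module.finrank_baseChange, hV])
  have hb (i : Fin (m + 1)) : G.baseChange ℂ (b i) = b (i + 1) := by
    simp only [b, coe_basisOfLinearIndependentOfCardEqFinrank]
    rw [← Module.End.mul_apply, ← pow_succ', Fin.val_add_one]
    split_ifs with hi
    · rw [hi, Fin.val_last, hG', pow_zero]
    · rfl
  have hdet := det_of_cyclic_basis b hb
  rw [LinearMap.det_baseChange, hm.neg_one_pow] at hdet
  exact Complex.ofReal_injective (by simpa using hdet)

end CyclicOrbit

end Spectrum

/-! ### Derivatives at fixed points -/

section Derivative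

open scoped Topology

variable {E : Type*} [NormedAddCommGroup E] [NormedSpace ℝ E] {h k : E → E} {y : E} {N : ℕ}

lemma fderiv_pow_eq_one (hs : DifferentiableAt ℝ h y) (hh : h^[N] = id) (hy : h y = y) :
    fderiv ℝ h y ^ N = 1 :=
  (hh ▸ hs.hasFDerivAt.iterate hy N).unique (hasFDerivAt_id y)

lemma fderiv_mul_fderiv_eq {i : ℕ} (hs : Differentiable ℝ h) (hk : Differentiable ℝ k)
    (hy : h y = y) (hky : h (k y) = k y) (hkh : k ∘ h = h^[i] ∘ k) :
    (fderiv ℝ k y : Module.End ℝ E) * fderiv ℝ h y =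
      (fderiv ℝ h (k y) : Module.End ℝ E) ^ i * fderiv ℝ k y := by
  have hl := (hy.symm ▸ (hk y).hasFDerivAt : HasFDerivAt k (fderiv ℝ k y) (h y)).comp y
    (hs y).hasFDerivAt
  have hr := ((hs _).hasFDerivAt.iterate hky i).comp y (hk y).hasFDerivAt
  have heq : fderiv ℝ k y * fderiv ℝ h y = fderiv ℝ h (k y) ^ i * fderiv ℝ k y :=
    hl.unique (hkh ▸ hr)
  simpa only [ContinuousLinearMap.toLinearMap_mul, ContinuousLinearMap.toLinearMap_pow] using
    congrArg ContinuousLinearMap.toLinearMap heq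

lemma fderiv_mul_fderiv_eq_of_fixed {i : ℕ} (hs : Differentiable ℝ h) (hk : Differentiable ℝ k)
    (hy : h y = y) (hky : k y = y) (hkh : h ∘ k = k ∘ h^[i]) :
    (fderiv ℝ h y : Module.End ℝ E) * fderiv ℝ k y =
      (fderiv ℝ k y : Module.End ℝ E) * (fderiv ℝ h y : Module.End ℝ E) ^ i := by
  have hl := (hky.symm ▸ (hs y).hasFDerivAt : HasFDerivAt h (fderiv ℝ h y) (k y)).comp y
    (hk y).hasFDerivAt
  have hr := ((Function.iterate_fixed hy i).symm ▸ (hk y).hasFDerivAt :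
    HasFDerivAt k (fderiv ℝ k y) (h^[i] y)).comp y ((hs y).hasFDerivAt.iterate hy i)
  have heq : fderiv ℝ h y * fderiv ℝ k y = fderiv ℝ k y * fderiv ℝ h y ^ i :=
    hl.unique (hkh ▸ hr)
  simpa only [ContinuousLinearMap.toLinearMap_mul, ContinuousLinearMap.toLinearMap_pow] using
    congrArg ContinuousLinearMap.toLinearMap heq

lemma isUnit_fderiv {e : Equiv.Perm E} (he : Differentiable ℝ e) (he' : Differentiable ℝ e.symm)
    (y : E) : IsUnit (fderiv ℝ e y) := by
  have hl : fderiv ℝ e.symm (e y) * fderiv ℝ e y = 1 :=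
    (((he' _).hasFDerivAt.comp y (he y).hasFDerivAt).congr_of_eventuallyEq
      (.of_forall fun x ↦ (e.symm_apply_apply x).symm)).unique (hasFDerivAt_id y)
  have hr : fderiv ℝ e y * fderiv ℝ e.symm (e y) = 1 := by
    have hey : HasFDerivAt e (fderiv ℝ e y) (e.symm (e y)) := by
      rw [e.symm_apply_apply]
      exact (he y).hasFDerivAt
    exact ((hey.comp (e y) (he' _).hasFDerivAt).congr_of_eventuallyEq
      (.of_forall fun x ↦ (e.apply_symm_apply x).symm)).unique (hasFDerivAt_id _)
  exact ⟨⟨_, _, hr, hl⟩, rfl⟩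

lemma fderiv_toLinearMap_pow_eq_one (hs : ContDiff ℝ 1 h) (hh : h^[N] = id) (hy : h y = y) :
    (fderiv ℝ h y : E →ₗ[ℝ] E) ^ N = 1 := by
  rw [← ContinuousLinearMap.toLinearMap_pow,
    fderiv_pow_eq_one (hs.differentiable one_ne_zero y) hh hy, ContinuousLinearMap.toLinearMap_one]

/-- A differentiable map preserves orientation if its Jacobian determinant is everywhere
positive. -/
def PreservesOrientation (k : E → E) : Prop := ∀ y, 0 < (fderiv ℝ k y).det

lemma PreservesOrientation.comp (hh : Differentiable ℝ h) (hk : Differentiable ℝ k)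
    (hh' : PreservesOrientation h) (hk' : PreservesOrientation k) :
    PreservesOrientation (h ∘ k) := fun y ↦ by
  rw [fderiv_comp y (hh _) (hk _), ContinuousLinearMap.det, ContinuousLinearMap.toLinearMap_comp,
    LinearMap.det_comp]
  exact mul_pos (hh' _) (hk' _)

lemma preservesOrientation_comp_self {e : Equiv.Perm E} (he : ContDiff ℝ 1 e)
    (he' : Differentiable ℝ e.symm) : PreservesOrientation (e ∘ e) := fun y ↦ by
  have hd := he.differentiable one_ne_zero
  have hne (x : E) : (fderiv ℝ e x).det ≠ 0 :=
    (((isUnit_fderiv hd he' x).map ContinuousLinearMap.toLinearMapRingHom).map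
      LinearMap.det).ne_zero
  have hcont : Continuous fun x ↦ (fderiv ℝ e x).det :=
    ContinuousLinearMap.continuous_det.comp (he.continuous_fderiv one_ne_zero)
  rw [fderiv_comp y (hd _) (hd _), ContinuousLinearMap.det, ContinuousLinearMap.toLinearMap_comp,
    LinearMap.det_comp]
  by_contra! hle
  obtain ⟨x, hx⟩ : (0 : ℝ) ∈ Set.range fun x ↦ (fderiv ℝ e x).det := by
    rcases mul_nonpos_iff.1 hle with ⟨h1, h2⟩ | ⟨h1, h2⟩
    · exact mem_range_of_exists_le_of_exists_ge hcont ⟨_, h2⟩ ⟨_, h1⟩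
    · exact mem_range_of_exists_le_of_exists_ge hcont ⟨_, h1⟩ ⟨_, h2⟩
  exact hne x hx

variable [FiniteDimensional ℝ E]

lemma exists_mem_nhds_injOn {φ : E → E} {φ' : E →L[ℝ] E} (hφ : HasStrictFDerivAt φ φ' y)
    (hinj : ∀ v, φ' v = 0 → v = 0) : ∃ U ∈ 𝓝 y, Set.InjOn φ U := by
  have : CompleteSpace E := FiniteDimensional.complete ℝ E
  let e := (LinearEquiv.ofInjectiveEndo (φ' : E →ₗ[ℝ] E)
    ((injective_iff_map_eq_zero _).2 hinj)).toContinuousLinearEquiv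
  have he : HasStrictFDerivAt φ (e : E →L[ℝ] E) y := hφ
  exact ⟨_, (he.toOpenPartialHomeomorph φ).open_source.mem_nhds
    he.mem_toOpenPartialHomeomorph_source, (he.toOpenPartialHomeomorph φ).injOn⟩

-- The average of the iterates of `h` is a local chart around `y` that absorbs `h`.
lemma fixedPoints_mem_nhds (hN : N ≠ 0) (hs : ContDiff ℝ 1 h) (hh : h^[N] = id) (hy : h y = y)
    (hD : fderiv ℝ h y = 1) : Function.fixedPoints h ∈ 𝓝 y := by
  set φ : E → E := fun x ↦ ∑ i ∈ Finset.range N, h^[i] x with hφ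
  have hφh (x : E) : φ (h x) = φ x := by
    have := Finset.sum_range_succ' (fun i ↦ h^[i] x) N
    rw [Finset.sum_range_succ, hh] at this
    simpa only [hφ, Function.iterate_succ_apply, Function.iterate_zero_apply, id_eq,
      add_left_inj] using this.symm
  have hφD : HasStrictFDerivAt φ (N : E →L[ℝ] E) y := by
    have hiter (i : ℕ) : HasStrictFDerivAt h^[i] (1 : E →L[ℝ] E) y := by
      have := (hs.contDiffAt.hasStrictFDerivAt one_ne_zero (x := y)).iterate hy i
      rwa [hD, one_pow] at this
    have := HasStrictFDerivAt.fun_sum (u := Finset.range N) fun i _ ↦ hiter i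
    rwa [Finset.sum_const, Finset.card_range, nsmul_one] at this
  obtain ⟨U, hU, hinj⟩ := exists_mem_nhds_injOn hφD fun v hv ↦ by
    have : (N : ℝ) • v = 0 := by
      rw [Nat.cast_smul_eq_nsmul]
      simpa using hv
    exact (smul_eq_zero.1 this).resolve_left (Nat.cast_ne_zero.2 hN)
  have hpre : h ⁻¹' U ∈ 𝓝 y := hs.continuous.continuousAt.preimage_mem_nhds (hy.symm ▸ hU)
  filter_upwards [hU, hpre] with x hx hhx using hinj hhx hx (hφh x)

lemma eq_id_of_fderiv_eq_one (hN : N ≠ 0) (hs : ContDiff ℝ 1 h) (hh : h^[N] = id)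
    (hne : (Function.fixedPoints h).Nonempty)
    (hD : ∀ y ∈ Function.fixedPoints h, fderiv ℝ h y = 1) : h = id := by
  have hclopen : IsClopen (Function.fixedPoints h) :=
    ⟨isClosed_fixedPoints hs.continuous,
      isOpen_iff_mem_nhds.2 fun y hy ↦ fixedPoints_mem_nhds hN hs hh hy (hD y hy)⟩
  funext x
  exact (hclopen.eq_univ hne ▸ Set.mem_univ x : x ∈ Function.fixedPoints h)

lemma subsingleton_fixedPoints (hs : ContDiff ℝ 1 h)
    (hconn : IsPreconnected (Function.fixedPoints h)) (hy : h y = y)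
    (hD : ∀ v, fderiv ℝ h y v = v → v = 0) {z : E} (hz : h z = z) : z = y := by
  obtain ⟨U, hU, hinj⟩ := exists_mem_nhds_injOn
    ((hs.contDiffAt.hasStrictFDerivAt one_ne_zero (x := y)).sub (hasStrictFDerivAt_id y))
    fun v hv ↦ hD v (sub_eq_zero.1 hv)
  by_contra hzy
  obtain ⟨x, hx, hxU, hxy⟩ := hconn (interior U) {y}ᶜ isOpen_interior isOpen_compl_singleton
    (fun x _ ↦ (eq_or_ne x y).imp_left (by rintro rfl; exact mem_interior_iff_mem_nhds.2 hU))
    ⟨y, hy, mem_interior_iff_mem_nhds.2 hU⟩ ⟨z, hz, hzy⟩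
  exact hxy (hinj (interior_subset hxU) (mem_of_mem_nhds hU)
    (by simp [show h x = x from hx, hy]))

lemma continuous_trace_fderiv_pow (hs : ContDiff ℝ 1 h) (i : ℕ) :
    Continuous fun y ↦ LinearMap.trace ℝ E ((fderiv ℝ h y : E →ₗ[ℝ] E) ^ i) := by
  simp only [← ContinuousLinearMap.toLinearMap_pow]
  exact (LinearMap.continuous_of_finiteDimensional
    (LinearMap.trace ℝ E ∘ₗ ContinuousLinearMap.coeLM ℝ)).comp
    ((hs.continuous_fderiv one_ne_zero).pow i)

lemma eigenMultiplicity_fderiv_eq [NeZero N] (hs : ContDiff ℝ 1 h) (hh : h^[N] = id)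
    (hconn : IsPreconnected (Function.fixedPoints h)) {z : E} (hy : h y = y) (hz : h z = z)
    (a : ZMod N) : eigenMultiplicity (fderiv ℝ h y : E →ₗ[ℝ] E) a =
      eigenMultiplicity (fderiv ℝ h z : E →ₗ[ℝ] E) a := by
  refine hconn.constant (f := fun x ↦ eigenMultiplicity (fderiv ℝ h x : E →ₗ[ℝ] E) a) ?_ hy hz
  rw [Nat.isClosedEmbedding_coe_real.isInducing.continuousOn_iff]
  have hcont : Continuous fun x ↦ ((N : ℂ)⁻¹ * ∑ j : ZMod N, ZMod.stdAddChar (-(a * j)) *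
      (LinearMap.trace ℝ E ((fderiv ℝ h x : E →ₗ[ℝ] E) ^ j.val) : ℂ)).re := by
    have := continuous_trace_fderiv_pow hs
    fun_prop
  refine hcont.continuousOn.congr fun x hx ↦ ?_
  have := congrArg Complex.re (eigenMultiplicity_eq (fderiv_toLinearMap_pow_eq_one hs hh hx) a)
  rwa [Complex.natCast_re] at this

end Derivative

/-! ### Unipotent and diagonal matrices -/

section SpecialLinear

open scoped MatrixGroups
open Matrix.SpecialLinearGroup

variable {F : Type*} [Field F]

/-- The upper unitriangular matrix `!![1, b; 0, 1]`. -/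
abbrev unipotent (b : F) : SL(2, F) := transvection zero_ne_one b

/-- The split torus of `SL₂`, sending `s` to `diag(s, s⁻¹)`. -/
noncomputable def torus : Fˣ →* SL(2, F) where
  toFun s := diag2 (s : F) s.ne_zero
  map_one' := Subtype.ext (by rw [diag2_coe']; simp [Matrix.one_fin_two])
  map_mul' s t := Subtype.ext (by
    rw [coe_mul, diag2_coe', diag2_coe', diag2_coe', Matrix.mul_fin_two]
    simp [mul_comm])

lemma coe_unipotent (b : F) : (unipotent b : Matrix (Fin 2) (Fin 2) F) = !![1, b; 0, 1] := by
  ext i j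
  fin_cases i <;> fin_cases j <;> simp [transvection_coe]

lemma coe_torus (s : Fˣ) : (torus s : Matrix (Fin 2) (Fin 2) F) = !![(s : F), 0; 0, (s : F)⁻¹] :=
  diag2_coe' s.ne_zero

lemma torus_neg_one : torus (-1 : Fˣ) = -1 := by
  apply Subtype.ext
  rw [coe_torus, coe_neg, coe_one, Matrix.one_fin_two]
  ext i j
  fin_cases i <;> fin_cases j <;> simp [inv_neg]

lemma unipotent_pow (b : F) (k : ℕ) : unipotent b ^ k = unipotent (k * b) := by
  induction k with
  | zero => simp
  | succ k ih => rw [pow_succ, ih, ← transvection_add, Nat.cast_succ, add_one_mul]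

lemma torus_mul_unipotent (s : Fˣ) (b : F) :
    torus s * unipotent b = unipotent (b * (s : F) ^ 2) * torus s := by
  apply Subtype.ext
  simp only [coe_mul, coe_torus, coe_unipotent, Matrix.mul_fin_two]
  ext i j
  fin_cases i <;> fin_cases j <;> simp [pow_two, mul_assoc, mul_comm]

lemma unipotent_mul_torus (s : Fˣ) (b : F) :
    unipotent b * torus s = torus s * unipotent (b * ((s⁻¹ : Fˣ) : F) ^ 2) := by
  rw [torus_mul_unipotent, mul_assoc, ← mul_pow, Units.inv_mul, one_pow, mul_one]

end SpecialLinear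

/-! ### The lower bound -/

section OrbitCounting

lemma injOn_mul_pow {F : Type*} [Field F] {a : F} (ha : a ≠ 0) (u : Fˣ) :
    Set.InjOn (fun i : ℕ ↦ a * (u : F) ^ i) (Set.Iio (orderOf u)) := fun i hi j hj hij ↦
  pow_injOn_Iio_orderOf hi hj (Units.ext (by simpa using mul_left_cancel₀ ha hij))

lemma add_orderOf_le_sum {F : Type*} [Field F] [Fintype F] {r : F → ℕ} {u : Fˣ}
    (hu : ∀ b, r (b * u) = r b) {a : F} (ha : a ≠ 0) (hra : r a ≠ 0) :
    r 0 + orderOf u ≤ ∑ b, r b := by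
  classical
  have hr (i : ℕ) : r (a * (u : F) ^ i) = r a := by
    induction i with
    | zero => rw [pow_zero, mul_one]
    | succ i ih => rw [pow_succ, ← mul_assoc, hu, ih]
  have h0 : 0 ∉ (Finset.range (orderOf u)).image fun i ↦ a * (u : F) ^ i := by
    simp [ha]
  calc r 0 + orderOf u = r 0 + ∑ i ∈ Finset.range (orderOf u), 1 := by simp
    _ ≤ r 0 + ∑ i ∈ Finset.range (orderOf u), r (a * (u : F) ^ i) := by
      gcongr with i
      exact hr i ▸ Nat.one_le_iff_ne_zero.2 hra
    _ = r 0 + ∑ b ∈ (Finset.range (orderOf u)).image fun i ↦ a * (u : F) ^ i, r b := by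
      rw [Finset.sum_image (by simpa [Finset.coe_range] using injOn_mul_pow ha u)]
    _ ≤ ∑ b, r b := by
      rw [← Finset.sum_insert h0]
      exact Finset.sum_le_sum_of_subset (Finset.subset_univ _)

lemma pow_half_eq_neg_one {R : Type*} [CommRing R] [IsDomain R] {s : Rˣ} {m : ℕ}
    (hs : orderOf s = 2 * (m + 1)) : s ^ (m + 1) = -1 := by
  have hroot := ((IsPrimitiveRoot.orderOf s).pow (hs ▸ by lia) (hs.trans (mul_comm _ _)))
  exact Units.ext (by simpa using (hroot.map_of_injective
    (f := Units.coeHom R) Units.val_injective).eq_neg_one_of_two_right)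

variable {p : ℕ} [Fact p.Prime]

lemma isSquare_or_isSquare_neg (h3 : p % 4 = 3) (b : ZMod p) : IsSquare b ∨ IsSquare (-b) := by
  rcases eq_or_ne b 0 with rfl | hb
  · exact .inl .zero
  refine or_iff_not_imp_left.2 fun hsq ↦ ?_
  have hneg : ¬IsSquare (-1 : ZMod p) := by
    rw [ZMod.exists_sq_eq_neg_one_iff]
    lia
  rw [← quadraticChar_one_iff_isSquare (neg_ne_zero.2 hb), ← neg_one_mul, map_mul,
    quadraticChar_neg_one_iff_not_isSquare.2 hneg, quadraticChar_neg_one_iff_not_isSquare.2 hsq]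
  rfl

lemma sub_one_le_sum (h3 : p % 4 = 3) {r : ZMod p → ℕ} (hneg : ∀ b, r (-b) = r b)
    (hsq : ∀ (s : (ZMod p)ˣ) b, r (b * (s : ZMod p) ^ 2) = r b) {a : ZMod p} (ha : a ≠ 0)
    (hra : r a ≠ 0) : p - 1 ≤ ∑ b, r b := by
  have hmul {c : ZMod p} (hc : c ≠ 0) (hc' : IsSquare c) : r (a * c) = r a := by
    obtain ⟨s, rfl⟩ := isSquare_iff_exists_sq c |>.1 hc'
    exact hsq (Units.mk0 s (pow_ne_zero_iff two_ne_zero |>.1 hc)) a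
  have hr {b : ZMod p} (hb : b ≠ 0) : r b = r a := by
    have hba : b / a ≠ 0 := div_ne_zero hb ha
    rcases isSquare_or_isSquare_neg h3 (b / a) with hs | hs
    · rw [← hmul hba hs, mul_div_cancel₀ _ ha]
    · rw [← hmul (neg_ne_zero.2 hba) hs, mul_neg, mul_div_cancel₀ _ ha, hneg]
  calc p - 1 = ∑ b ∈ Finset.univ.erase (0 : ZMod p), 1 := by simp [ZMod.card]
    _ ≤ ∑ b ∈ Finset.univ.erase (0 : ZMod p), r b := Finset.sum_le_sum fun b hb ↦
      hr (Finset.ne_of_mem_erase hb) ▸ Nat.one_le_iff_ne_zero.2 hra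
    _ ≤ ∑ b, r b := Finset.sum_le_sum_of_subset (Finset.erase_subset _ _)

end OrbitCounting

lemma differentiable_symm_of_action {G E : Type*} [Group G] [NormedAddCommGroup E]
    [NormedSpace ℝ E] {σ : G →* Equiv.Perm E} (hσ : ∀ g, ContDiff ℝ 1 (σ g)) (g : G) :
    Differentiable ℝ (σ g).symm := by
  rw [← Equiv.Perm.inv_def, ← map_inv]
  exact (hσ g⁻¹).differentiable one_ne_zero

section LowerBound

open scoped MatrixGroups
open Matrix.SpecialLinearGroup

variable {p : ℕ} [Fact p.Prime] {n : ℕ}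
  (σ : SL(2, ZMod p) →* Equiv.Perm (EuclideanSpace ℝ (Fin n)))

/-- The multiplicity of `exp (2πia/p)` as an eigenvalue of the derivative at `y` of the
transformation induced by `unipotent 1`. -/
noncomputable def isotropyMultiplicity (y : EuclideanSpace ℝ (Fin n)) (a : ZMod p) : ℕ :=
  eigenMultiplicity (fderiv ℝ (σ (unipotent 1)) y : Module.End ℝ (EuclideanSpace ℝ (Fin n))) a

lemma iterate_unipotent_val (b : ZMod p) : (σ (unipotent 1))^[b.val] = σ (unipotent b) := by
  rw [Equiv.Perm.iterate_eq_pow, ← map_pow, unipotent_pow, ZMod.natCast_zmod_val, mul_one]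

lemma iterate_unipotent_prime : (σ (unipotent 1))^[p] = id := by
  rw [Equiv.Perm.iterate_eq_pow, ← map_pow, unipotent_pow, ZMod.natCast_self, zero_mul,
    unipotent, transvection_coeff_zero, map_one]
  rfl

lemma torus_comp_unipotent (s : (ZMod p)ˣ) :
    σ (torus s) ∘ σ (unipotent 1) =
      (σ (unipotent 1))^[((s : ZMod p) ^ 2).val] ∘ σ (torus s) := by
  rw [iterate_unipotent_val, ← Equiv.Perm.coe_mul, ← Equiv.Perm.coe_mul, ← map_mul, ← map_mul,
    torus_mul_unipotent, one_mul]

lemma unipotent_comp_torus (s : (ZMod p)ˣ) :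
    σ (unipotent 1) ∘ σ (torus s) =
      σ (torus s) ∘ (σ (unipotent 1))^[(((s⁻¹ : (ZMod p)ˣ) : ZMod p) ^ 2).val] := by
  rw [iterate_unipotent_val, ← Equiv.Perm.coe_mul, ← Equiv.Perm.coe_mul, ← map_mul, ← map_mul,
    unipotent_mul_torus, one_mul]

variable {y z : EuclideanSpace ℝ (Fin n)}

lemma unipotent_torus_apply (hy : σ (unipotent 1) y = y) (s : (ZMod p)ˣ) :
    σ (unipotent 1) (σ (torus s) y) = σ (torus s) y :=
  (congrFun (unipotent_comp_torus σ s) y).trans (congrArg _ (Function.iterate_fixed hy _))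

variable {σ} (hσ : ∀ g, ContDiff ℝ 1 (σ g))

include hσ

lemma preservesOrientation_action (hp2 : p ≠ 2) (g : SL(2, ZMod p)) :
    PreservesOrientation (σ g) := by
  induction g using SL2.transvection_induction with
  | htransvec i j hij c =>
    have : NeZero (2 : ZMod p) := ⟨zmod_two_ne_zero hp2⟩
    rw [← add_halves c, transvection_add, map_mul, Equiv.Perm.coe_mul]
    exact preservesOrientation_comp_self (hσ _) (differentiable_symm_of_action hσ _)
  | hmul A B hA hB =>
    rw [map_mul, Equiv.Perm.coe_mul]
    exact hA.comp ((hσ A).differentiable one_ne_zero)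
      ((hσ B).differentiable one_ne_zero) hB

lemma isotropyMultiplicity_eq (hp2 : p ≠ 2) (hy : σ (unipotent 1) y = y)
    (hz : σ (unipotent 1) z = z) (a : ZMod p) :
    isotropyMultiplicity σ y a = isotropyMultiplicity σ z a :=
  eigenMultiplicity_fderiv_eq (hσ _) (iterate_unipotent_prime σ)
    (isPreconnected_fixedPoints hp2 (hσ _).continuous (iterate_unipotent_prime σ)) hy hz a

lemma fderiv_unipotent_pow (hy : σ (unipotent 1) y = y) :
    (fderiv ℝ (σ (unipotent 1)) y : Module.End ℝ (EuclideanSpace ℝ (Fin n))) ^ p = 1 :=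
  fderiv_toLinearMap_pow_eq_one (hσ _) (iterate_unipotent_prime σ) hy

lemma isotropyMultiplicity_mul_sq (hp2 : p ≠ 2) (hy : σ (unipotent 1) y = y) (s : (ZMod p)ˣ)
    (a : ZMod p) :
    isotropyMultiplicity σ y (a * (s : ZMod p) ^ 2) = isotropyMultiplicity σ y a := by
  have hz := unipotent_torus_apply σ hy s
  have hd (g : SL(2, ZMod p)) : Differentiable ℝ (σ g) := (hσ g).differentiable one_ne_zero
  rw [isotropyMultiplicity_eq hσ hp2 hy hz a]
  exact eigenMultiplicity_mul_of_conj (fderiv_unipotent_pow hσ hy) (fderiv_unipotent_pow hσ hz)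
    ((isUnit_fderiv (hd (torus s)) (differentiable_symm_of_action hσ _) y).map
      ContinuousLinearMap.toLinearMapRingHom) (pow_ne_zero 2 s.ne_zero)
    (fderiv_mul_fderiv_eq (hd _) (hd _) hy hz (torus_comp_unipotent σ s)) a

lemma sum_isotropyMultiplicity (hy : σ (unipotent 1) y = y) :
    ∑ a, isotropyMultiplicity σ y a = n :=
  (sum_eigenMultiplicity (fderiv_unipotent_pow hσ hy)).trans finrank_euclideanSpace_fin

lemma exists_isotropyMultiplicity_ne_zero (hp2 : p ≠ 2) (h1 : σ (unipotent 1) ≠ 1)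
    (hy : σ (unipotent 1) y = y) : ∃ a ≠ 0, isotropyMultiplicity σ y a ≠ 0 := by
  by_contra! H
  refine h1 (Equiv.ext fun x ↦ congrFun (eq_id_of_fderiv_eq_one (NeZero.ne p) (hσ _)
    (iterate_unipotent_prime σ) ⟨y, hy⟩ fun z hz ↦ ?_) x)
  exact ContinuousLinearMap.coe_injective (eq_one_of_eigenMultiplicity
    (fderiv_unipotent_pow hσ hz) fun a ha ↦ (isotropyMultiplicity_eq hσ hp2 hz hy a).trans (H a ha))

theorem sub_one_le_dim_of_mod_four_eq_three (h3 : p % 4 = 3) (h1 : σ (unipotent 1) ≠ 1) :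
    p - 1 ≤ n := by
  have hp2 : p ≠ 2 := by lia
  obtain ⟨y, hy⟩ :=
    nonempty_fixedPoints hp2 (hσ (unipotent 1)).continuous (iterate_unipotent_prime σ)
  obtain ⟨a, ha, hra⟩ := exists_isotropyMultiplicity_ne_zero hσ hp2 h1 hy
  rw [← sum_isotropyMultiplicity hσ hy]
  exact sub_one_le_sum h3 (eigenMultiplicity_neg (fderiv_unipotent_pow hσ hy))
    (isotropyMultiplicity_mul_sq hσ hp2 hy) ha hra

lemma torus_apply_of_isotropyMultiplicity_zero (hp2 : p ≠ 2) (hy : σ (unipotent 1) y = y)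
    (h0 : isotropyMultiplicity σ y 0 = 0) (s : (ZMod p)ˣ) : σ (torus s) y = y :=
  subsingleton_fixedPoints (hσ _)
    (isPreconnected_fixedPoints hp2 (hσ _).continuous (iterate_unipotent_prime σ)) hy
    (fun _ ↦ eq_zero_of_eigenMultiplicity_zero h0) (unipotent_torus_apply σ hy s)

lemma det_fderiv_torus (hneg : σ (-1) = 1) {m : ℕ} (hm : Odd m) (hn : n = m + 1)
    {s : (ZMod p)ˣ} (hs : orderOf s = 2 * (m + 1)) (hy : σ (unipotent 1) y = y)
    (hfix : σ (torus s) y = y) {a : ZMod p} (ha : a ≠ 0) (hra : isotropyMultiplicity σ y a ≠ 0) :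
    (fderiv ℝ (σ (torus s)) y).det = -1 := by
  have hd (g : SL(2, ZMod p)) : Differentiable ℝ (σ g) := (hσ g).differentiable one_ne_zero
  have hperiod : (σ (torus s))^[m + 1] = id := by
    rw [Equiv.Perm.iterate_eq_pow, ← map_pow, ← map_pow, pow_half_eq_neg_one hs, torus_neg_one,
      hneg]
    rfl
  have horder : orderOf (s⁻¹ ^ 2) = m + 1 := by
    rw [orderOf_pow_of_dvd two_ne_zero (by simp [hs]), orderOf_inv, hs]
    lia
  refine det_eq_neg_one_of_permutes_eigenvalues hm (finrank_euclideanSpace_fin.trans hn)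
    (fderiv_mul_fderiv_eq_of_fixed (hd _) (hd _) hy hfix (unipotent_comp_torus σ s))
    (fderiv_toLinearMap_pow_eq_one (hσ _) hperiod hfix) hra ?_
  rw [ZMod.natCast_zmod_val, ← Units.val_pow_eq_pow_val, ← horder]
  exact injOn_mul_pow ha (s⁻¹ ^ 2)

theorem half_add_one_le_dim_of_mod_four_eq_one (h4 : p % 4 = 1) (h1 : σ (unipotent 1) ≠ 1)
    (hneg : σ (-1) = 1) : (p + 1) / 2 ≤ n := by
  have hp2 : p ≠ 2 := by lia
  obtain ⟨m, hm, hpm⟩ : ∃ m, Odd m ∧ p = 2 * (m + 1) + 1 :=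
    ⟨(p - 1) / 2 - 1, Nat.odd_iff.2 (by have := Fact.out (p := p.Prime) |>.one_lt; lia),
      by have := Fact.out (p := p.Prime) |>.one_lt; lia⟩
  obtain ⟨s, hs⟩ : ∃ s : (ZMod p)ˣ, orderOf s = 2 * (m + 1) := by
    obtain ⟨s, hs⟩ := IsCyclic.exists_ofOrder_eq_natCard (α := (ZMod p)ˣ)
    exact ⟨s, by rw [hs, Nat.card_eq_fintype_card, ZMod.card_units, hpm, Nat.add_sub_cancel]⟩
  obtain ⟨y, hy⟩ :=
    nonempty_fixedPoints hp2 (hσ (unipotent 1)).continuous (iterate_unipotent_prime σ)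
  obtain ⟨a, ha, hra⟩ := exists_isotropyMultiplicity_ne_zero hσ hp2 h1 hy
  have hle : isotropyMultiplicity σ y 0 + (m + 1) ≤ n := by
    have horder : orderOf (s ^ 2) = m + 1 := by
      rw [orderOf_pow_of_dvd two_ne_zero (by simp [hs]), hs, Nat.mul_div_cancel_left _ two_pos]
    calc _ = isotropyMultiplicity σ y 0 + orderOf (s ^ 2) := by rw [horder]
      _ ≤ ∑ b, isotropyMultiplicity σ y b :=
        add_orderOf_le_sum (by simpa using isotropyMultiplicity_mul_sq hσ hp2 hy s) ha hra
      _ = n := sum_isotropyMultiplicity hσ hy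
  by_contra! hlt
  have hfix := torus_apply_of_isotropyMultiplicity_zero hσ hp2 hy (by lia) s
  have hpos := preservesOrientation_action hσ hp2 (torus s) y
  rw [det_fderiv_torus hσ hneg hm (by lia) hs hy hfix ha hra] at hpos
  linarith

end LowerBound

/-! ### Representations of `PSL₂` -/

section Representations

open scoped MatrixGroups
open Module

/-- The subrepresentation on an eigenspace of an operator commuting with the group. -/
def eigenRepresentation {k G V : Type*} [CommRing k] [Monoid G] [AddCommGroup V] [Module k V]
    (ρ : Representation k G V) {T : End k V} (hT : ∀ g, Commute T (ρ g)) (μ : k) :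
    Representation k G (End.eigenspace T μ) :=
  ρ.subrepresentation _ fun g ↦ End.mapsTo_genEigenspace_of_comm (hT g) μ 1

lemma eq_one_or_neg_one_of_mem_center {F : Type*} [Field F] {g : SL(2, F)}
    (hg : g ∈ Subgroup.center SL(2, F)) : g = 1 ∨ g = -1 := by
  obtain ⟨r, hr, h⟩ := Matrix.SpecialLinearGroup.mem_center_iff.1 hg
  rcases sq_eq_one_iff.1 hr with rfl | rfl
  · exact .inl (Subtype.ext (h.symm.trans (map_one _)))
  · exact .inr (Subtype.ext (h.symm.trans (by rw [map_neg, map_one]; rfl)))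

theorem exists_injective_of_representation {F k V : Type*} [Field F] [Field k] [AddCommGroup V]
    [Module k V] [FiniteDimensional k V] (hF : 4 ≤ Nat.card F) {ρ : Representation k SL(2, F) V}
    (hneg : ρ (-1) = 1) (hρ : ρ ≠ 1) :
    ∃ f : ProjectiveSpecialLinearGroup (Fin 2) F →* GL (Fin (finrank k V)) k,
      Function.Injective f := by
  have := ProjectiveSpecialLinearGroup.rank_two_simple hF
  have hcenter : Subgroup.center SL(2, F) ≤ ρ.toHomUnits.ker := fun g hg ↦ by
    rcases eq_one_or_neg_one_of_mem_center hg with rfl | rfl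
    · exact one_mem _
    · exact Units.ext hneg
  let f := (GeneralLinearGroup.toLin' (finBasis k V)).symm.toMonoidHom.comp
    (QuotientGroup.lift _ ρ.toHomUnits hcenter)
  refine ⟨f, (MonoidHom.ker_eq_bot_iff f).1 (f.normal_ker.eq_bot_or_eq_top.resolve_right
    fun htop ↦ hρ (MonoidHom.ext fun g ↦ ?_))⟩
  have hg : f (QuotientGroup.mk g) = 1 := f.mem_ker.1 (htop ▸ Subgroup.mem_top _)
  exact congrArg Units.val
    ((GeneralLinearGroup.toLin' (finBasis k V)).symm.map_eq_one_iff.1 hg)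

/-- A complex representation, regarded as a real one. -/
def realRepresentation {G V : Type*} [Monoid G] [AddCommGroup V] [Module ℂ V]
    (ρ : Representation ℂ G V) : Representation ℝ G V where
  toFun g := (ρ g).restrictScalars ℝ
  map_one' := by rw [map_one]; rfl
  map_mul' g h := by rw [map_mul]; rfl

theorem exists_injective_of_complex_representation {F V : Type*} [Field F] [AddCommGroup V]
    [Module ℂ V] [FiniteDimensional ℂ V] (hF : 4 ≤ Nat.card F) {ρ : Representation ℂ SL(2, F) V}
    (hneg : ρ (-1) = 1) (hρ : ρ ≠ 1) :
    ∃ f : ProjectiveSpecialLinearGroup (Fin 2) F →* GL (Fin (2 * finrank ℂ V)) ℝ,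
      Function.Injective f := by
  have : FiniteDimensional ℝ V := .complexToReal V
  rw [← finrank_real_of_complex]
  refine exists_injective_of_representation hF (ρ := realRepresentation ρ)
    (congrArg (LinearMap.restrictScalars ℝ) hneg) fun h ↦ hρ (MonoidHom.ext fun g ↦ ?_)
  exact LinearMap.restrictScalars_injective ℝ (DFunLike.congr_fun h g)

end Representations

/-! ### Splitting the principal series of a quadratic character -/

section PrincipalSeries

open scoped MatrixGroups
open Module

/-- The left translation representation on functions on a `G`-set. -/
def functionRepresentation (k G X : Type*) [CommSemiring k] [Group G] [MulAction G X] :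
    Representation k G (X → k) where
  toFun g := LinearMap.funLeft k k (g⁻¹ • ·)
  map_one' := by ext; simp [LinearMap.funLeft]
  map_mul' g h := by ext; simp [LinearMap.funLeft, mul_smul]

lemma functionRepresentation_apply {k G X : Type*} [CommSemiring k] [Group G] [MulAction G X]
    (g : G) (f : X → k) (x : X) : functionRepresentation k G X g f x = f (g⁻¹ • x) :=
  rfl

lemma commute_functionRepresentation {k G X : Type*} [CommRing k] [Group G] [MulAction G X]
    [Fintype X] [DecidableEq X] {A : Matrix X X k} (hA : ∀ (g : G) x y, A (g • x) (g • y) = A x y)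
    (g : G) : Commute (Matrix.toLin' A) (functionRepresentation k G X g) := by
  refine LinearMap.ext fun f ↦ funext fun x ↦ ?_
  simp only [Module.End.mul_apply, functionRepresentation_apply, Matrix.toLin'_apply,
    Matrix.mulVec, dotProduct]
  exact Fintype.sum_equiv (MulAction.toPerm g⁻¹) _ _ fun y ↦ by
    rw [MulAction.toPerm_apply, hA]

lemma mul_smul_smul {k G X : Type*} [CommRing k] [Group G] [MulAction G X] [Fintype X]
    {A B : Matrix X X k} (hA : ∀ (g : G) x y, A (g • x) (g • y) = A x y)
    (hB : ∀ (g : G) x y, B (g • x) (g • y) = B x y) (g : G) (x y : X) :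
    (A * B) (g • x) (g • y) = (A * B) x y :=
  (Fintype.sum_equiv (MulAction.toPerm g) _ _ fun z ↦
    (congrArg₂ (· * ·) (hA g x z) (hB g z y)).symm).symm

lemma finrank_eigenspace_of_pow_three {k V : Type*} [Field k] [CharZero k] [AddCommGroup V]
    [Module k V] [FiniteDimensional k V] {T : End k V} {μ : k} (hμ : μ ≠ 0)
    (hT : T ^ 3 = μ ^ 2 • T) :
    2 * μ ^ 2 * finrank k (End.eigenspace T μ) =
      LinearMap.trace k V (T ^ 2) + μ * LinearMap.trace k V T := by
  have hproj : LinearMap.IsProj (End.eigenspace T μ) ((2 * μ ^ 2)⁻¹ • (T ^ 2 + μ • T)) := by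
    constructor
    · intro v
      refine End.mem_eigenspace_iff.2 ?_
      have hT' : T (T (T v)) = μ ^ 2 • T v := LinearMap.congr_fun hT v
      simp only [LinearMap.smul_apply, LinearMap.add_apply, map_smul, map_add, pow_two,
        Module.End.mul_apply, hT']
      module
    · intro v hv
      have hv' : T v = μ • v := End.mem_eigenspace_iff.1 hv
      simp only [LinearMap.smul_apply, LinearMap.add_apply, map_smul, pow_two,
        Module.End.mul_apply, hv', smul_smul, ← add_smul]
      rw [show (2 * (μ * μ))⁻¹ * (μ * μ + μ * μ) = 1 by field_simp; ring, one_smul]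
  have h := hproj.trace
  rw [map_smul, map_add, map_smul, smul_eq_mul, smul_eq_mul] at h
  rw [← h, mul_inv_cancel_left₀ (mul_ne_zero two_ne_zero (pow_ne_zero 2 hμ))]

lemma sum_fin_two_fun {F M : Type*} [Fintype F] [AddCommMonoid M] (f : (Fin 2 → F) → M) :
    ∑ v, f v = ∑ b, ∑ a, f ![a, b] :=
  ((finTwoArrowEquiv F).symm.sum_comp f).symm.trans (Fintype.sum_prod_type_right _)

variable {F : Type*} [Field F]

/-- The matrix of the standard intertwining operator from the principal series of `SL₂(F)` with
character `ψ` to the one with character `ψ⁻¹`, extended to all functions on the plane. Up to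
scaling of rows and columns it is a Paley conference matrix when `ψ` is quadratic. -/
def intertwiningMatrix (ψ : MulChar F ℝ) : Matrix (Fin 2 → F) (Fin 2 → F) ℝ :=
  .of fun v w ↦ ψ (v 0 * w 1 - v 1 * w 0)

variable {ψ : MulChar F ℝ}

lemma intertwiningMatrix_apply (v w : Fin 2 → F) :
    intertwiningMatrix ψ v w = ψ (v 0 * w 1 - v 1 * w 0) :=
  rfl

lemma intertwiningMatrix_zero_left (w : Fin 2 → F) : intertwiningMatrix ψ 0 w = 0 := by
  simp [intertwiningMatrix_apply, ψ.map_zero]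

lemma intertwiningMatrix_self (v : Fin 2 → F) : intertwiningMatrix ψ v v = 0 := by
  simp [intertwiningMatrix_apply, mul_comm, ψ.map_zero]

lemma intertwiningMatrix_neg_left (hneg : ψ (-1) = 1) (v w : Fin 2 → F) :
    intertwiningMatrix ψ (-v) w = intertwiningMatrix ψ v w := by
  rw [intertwiningMatrix_apply, intertwiningMatrix_apply, ← one_mul (ψ _), ← hneg, ← map_mul]
  congr 1
  simp only [Pi.neg_apply]
  ring

lemma intertwiningMatrix_smul_smul (g : SL(2, F)) (v w : Fin 2 → F) :
    intertwiningMatrix ψ (g • v) (g • w) = intertwiningMatrix ψ v w := by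
  have hg : g 0 0 * g 1 1 - g 0 1 * g 1 0 = 1 := (det_fin_two _).symm.trans g.det_coe
  simp only [intertwiningMatrix_apply, Matrix.SpecialLinearGroup.smul_def, smul_eq_mulVec,
    Matrix.mulVec, dotProduct, Fin.sum_univ_two]
  congr 1
  linear_combination (v 0 * w 1 - v 1 * w 0) * hg

lemma exists_smul_eq {v : Fin 2 → F} (hv : v ≠ 0) : ∃ g : SL(2, F), g • ![1, 0] = v := by
  have hcop : IsCoprime (v 0) (v 1) := by
    by_cases h0 : v 0 = 0
    · rw [h0, isCoprime_zero_left, isUnit_iff_ne_zero]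
      exact fun h1 ↦ hv (funext (Fin.forall_fin_two.2 ⟨h0, h1⟩))
    · exact ⟨(v 0)⁻¹, 0, by simp [h0]⟩
  obtain ⟨g, h0, h1⟩ := hcop.exists_SL2_col 0
  refine ⟨g, funext (Fin.forall_fin_two.2 ⟨?_, ?_⟩)⟩ <;>
    simpa [Matrix.SpecialLinearGroup.smul_def, smul_eq_mulVec]

variable [Fintype F]

lemma sum_mulChar_sq (hquad : ψ ^ 2 = 1) : ∑ a, ψ a * ψ a = Fintype.card F - 1 := by
  classical
  have h (a : F) : ψ a * ψ a = (1 : MulChar F ℝ) a := by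
    rw [← MulChar.mul_apply, ← pow_two, hquad]
  rw [Finset.sum_congr rfl fun a _ ↦ h a, MulChar.sum_one_eq_card_units, Fintype.card_units,
    Nat.cast_pred Fintype.card_pos]

lemma intertwiningMatrix_sq_smul_smul (g : SL(2, F)) (v w : Fin 2 → F) :
    (intertwiningMatrix ψ * intertwiningMatrix ψ) (g • v) (g • w) =
      (intertwiningMatrix ψ * intertwiningMatrix ψ) v w :=
  mul_smul_smul intertwiningMatrix_smul_smul intertwiningMatrix_smul_smul g v w

lemma intertwiningMatrix_sq_apply [DecidableEq F] (hψ : ψ ≠ 1) (hquad : ψ ^ 2 = 1)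
    (hneg : ψ (-1) = 1) (w : Fin 2 → F) :
    (intertwiningMatrix ψ * intertwiningMatrix ψ) ![1, 0] w =
      if w 1 = 0 then Fintype.card F * (Fintype.card F - 1) * ψ (w 0) else 0 := by
  have hsum : (intertwiningMatrix ψ * intertwiningMatrix ψ) ![1, 0] w =
      ∑ b, ψ b * ∑ a, ψ (a * w 1 - b * w 0) := by
    simp [Matrix.mul_apply, sum_fin_two_fun, intertwiningMatrix_apply, Finset.mul_sum]
  rw [hsum]
  split_ifs with hw
  · have hb (b : F) : ψ b * ∑ a, ψ (a * w 1 - b * w 0) =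
        Fintype.card F * ψ (w 0) * (ψ b * ψ b) := by
      have hbw : ψ (-(b * w 0)) = ψ b * ψ (w 0) := by
        rw [neg_eq_neg_one_mul, map_mul, map_mul, hneg, one_mul]
      simp only [hw, mul_zero, zero_sub, hbw, Finset.sum_const, Finset.card_univ, nsmul_eq_mul]
      ring
    rw [Finset.sum_congr rfl fun b _ ↦ hb b, ← Finset.mul_sum, sum_mulChar_sq hquad]
    ring
  · refine Finset.sum_eq_zero fun b _ ↦ mul_eq_zero_of_right _ ?_
    exact (((Equiv.mulRight₀ _ hw).trans (Equiv.subRight (b * w 0))).sum_comp ψ).trans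
      (MulChar.sum_eq_zero_of_ne_one hψ)

lemma intertwiningMatrix_pow_three_apply (hψ : ψ ≠ 1) (hquad : ψ ^ 2 = 1) (hneg : ψ (-1) = 1)
    (w : Fin 2 → F) :
    (intertwiningMatrix ψ * intertwiningMatrix ψ * intertwiningMatrix ψ) ![1, 0] w =
      Fintype.card F * (Fintype.card F - 1) ^ 2 * intertwiningMatrix ψ ![1, 0] w := by
  classical
  rw [Matrix.mul_apply, sum_fin_two_fun, Finset.sum_eq_single 0]
  · have hrow (a : F) : (intertwiningMatrix ψ * intertwiningMatrix ψ) ![1, 0] ![a, 0] *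
        intertwiningMatrix ψ ![a, 0] w =
          Fintype.card F * (Fintype.card F - 1) * ψ (w 1) * (ψ a * ψ a) := by
      simp only [intertwiningMatrix_sq_apply hψ hquad hneg, intertwiningMatrix_apply,
        Matrix.cons_val, if_true, zero_mul, sub_zero, map_mul]
      ring
    rw [Finset.sum_congr rfl fun a _ ↦ hrow a, ← Finset.mul_sum, sum_mulChar_sq hquad]
    simp only [intertwiningMatrix_apply, Matrix.cons_val, one_mul, zero_mul, sub_zero]
    ring
  · exact fun b _ hb ↦ Finset.sum_eq_zero fun a _ ↦ by
      simp [intertwiningMatrix_sq_apply hψ hquad hneg, hb]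
  · simp

lemma intertwiningMatrix_pow_three [DecidableEq F] (hψ : ψ ≠ 1) (hquad : ψ ^ 2 = 1)
    (hneg : ψ (-1) = 1) : intertwiningMatrix ψ ^ 3 =
      (√(Fintype.card F) * (Fintype.card F - 1)) ^ 2 • intertwiningMatrix ψ := by
  ext v w
  rw [pow_three', Matrix.smul_apply, mul_pow, Real.sq_sqrt (Nat.cast_nonneg _), smul_eq_mul]
  by_cases hv : v = 0
  · simp [hv, mul_assoc _ (intertwiningMatrix ψ), Matrix.mul_apply (N := _ * _),
      intertwiningMatrix_zero_left]
  obtain ⟨g, rfl⟩ := exists_smul_eq hv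
  rw [← smul_inv_smul g w,
    mul_smul_smul intertwiningMatrix_sq_smul_smul intertwiningMatrix_smul_smul,
    intertwiningMatrix_smul_smul, intertwiningMatrix_pow_three_apply hψ hquad hneg]

lemma trace_intertwiningMatrix : (intertwiningMatrix ψ).trace = 0 :=
  Finset.sum_eq_zero fun v _ ↦ intertwiningMatrix_self v

lemma trace_intertwiningMatrix_sq (hψ : ψ ≠ 1) (hquad : ψ ^ 2 = 1) (hneg : ψ (-1) = 1) :
    (intertwiningMatrix ψ * intertwiningMatrix ψ).trace =
      (Fintype.card F ^ 2 - 1) * (Fintype.card F * (Fintype.card F - 1)) := by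
  classical
  have hdiag (v : Fin 2 → F) : (intertwiningMatrix ψ * intertwiningMatrix ψ) v v =
      if v = 0 then (0 : ℝ) else Fintype.card F * (Fintype.card F - 1) := by
    split_ifs with hv
    · simp [hv, Matrix.mul_apply, intertwiningMatrix_zero_left]
    · obtain ⟨g, rfl⟩ := exists_smul_eq hv
      simp [intertwiningMatrix_sq_smul_smul, intertwiningMatrix_sq_apply hψ hquad hneg]
  rw [Matrix.trace, Finset.sum_congr rfl fun v _ ↦ (Matrix.diag_apply _ v).trans (hdiag v),
    Finset.sum_ite, Finset.sum_const_zero, zero_add, Finset.sum_const, Finset.filter_ne',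
    Finset.card_erase_of_mem (Finset.mem_univ _), Finset.card_univ, Fintype.card_fun,
    Fintype.card_fin, nsmul_eq_mul, Nat.cast_pred (pow_pos Fintype.card_pos 2), Nat.cast_pow]

/-- The positive eigenspace of the intertwining operator. -/
noncomputable abbrev intertwiningEigenspace [DecidableEq F] (ψ : MulChar F ℝ) :
    Submodule ℝ ((Fin 2 → F) → ℝ) :=
  End.eigenspace (Matrix.toLin' (intertwiningMatrix ψ)) (√(Fintype.card F) * (Fintype.card F - 1))

/-- The representation of `SL₂(F)` on the positive eigenspace of the intertwining operator, half
of the principal series of the quadratic character `ψ`. -/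
noncomputable def halfPrincipalSeries [DecidableEq F] (ψ : MulChar F ℝ) :
    Representation ℝ SL(2, F) (intertwiningEigenspace ψ) :=
  eigenRepresentation (functionRepresentation ℝ SL(2, F) (Fin 2 → F))
    (commute_functionRepresentation intertwiningMatrix_smul_smul) _

lemma sqrt_card_mul_ne_zero : √(Fintype.card F) * (Fintype.card F - 1 : ℝ) ≠ 0 :=
  have hcard : (1 : ℝ) < Fintype.card F := Nat.one_lt_cast.2 Fintype.one_lt_card
  mul_ne_zero (Real.sqrt_pos.2 (by linarith)).ne' (sub_pos.2 hcard).ne'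

lemma two_mul_finrank_eigenspace_intertwiningMatrix [DecidableEq F] (hψ : ψ ≠ 1)
    (hquad : ψ ^ 2 = 1) (hneg : ψ (-1) = 1) :
    2 * finrank ℝ (intertwiningEigenspace ψ) = Fintype.card F + 1 := by
  have hcube : Matrix.toLin' (intertwiningMatrix ψ) ^ 3 =
      (√(Fintype.card F) * (Fintype.card F - 1)) ^ 2 • Matrix.toLin' (intertwiningMatrix ψ) := by
    rw [← Matrix.toLin'_pow, intertwiningMatrix_pow_three hψ hquad hneg, map_smul]
  have h := finrank_eigenspace_of_pow_three sqrt_card_mul_ne_zero hcube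
  rw [← Matrix.toLin'_pow, Matrix.trace_toLin'_eq, Matrix.trace_toLin'_eq,
    pow_two (_ : Matrix _ _ _), trace_intertwiningMatrix,
    trace_intertwiningMatrix_sq hψ hquad hneg, mul_pow, Real.sq_sqrt (Nat.cast_nonneg _)] at h
  have hcard : (1 : ℝ) < Fintype.card F := Nat.one_lt_cast.2 Fintype.one_lt_card
  have hne : (Fintype.card F : ℝ) * (Fintype.card F - 1) ^ 2 ≠ 0 := by
    have := sub_pos.2 hcard
    positivity
  exact_mod_cast mul_left_cancel₀ hne (by linear_combination h :
    (Fintype.card F : ℝ) * (Fintype.card F - 1) ^ 2 * (2 * finrank ℝ (intertwiningEigenspace ψ)) =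
    Fintype.card F * (Fintype.card F - 1) ^ 2 * (Fintype.card F + 1))

lemma mul_apply_of_mem_eigenspace [DecidableEq F] {μ : ℝ} {f : (Fin 2 → F) → ℝ}
    (hf : f ∈ End.eigenspace (Matrix.toLin' (intertwiningMatrix ψ)) μ) (v : Fin 2 → F) :
    μ * f v = ∑ w, intertwiningMatrix ψ v w * f w :=
  (congrFun (End.mem_eigenspace_iff.1 hf) v).symm

lemma halfPrincipalSeries_neg_one [DecidableEq F] (hneg : ψ (-1) = 1) :
    halfPrincipalSeries ψ (-1) = 1 := by
  refine LinearMap.ext fun f ↦ Subtype.ext (funext fun v ↦ ?_)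
  have hv : (halfPrincipalSeries ψ (-1) f).1 v = f.1 (-v) := congrArg f.1 <| by
    simp [Matrix.SpecialLinearGroup.smul_def, inv_neg, Matrix.neg_mulVec]
  refine hv.trans (mul_left_cancel₀ (sqrt_card_mul_ne_zero (F := F)) ?_)
  rw [mul_apply_of_mem_eigenspace f.2]
  simp only [intertwiningMatrix_neg_left hneg]
  exact (mul_apply_of_mem_eigenspace f.2 v).symm

lemma eq_zero_of_halfPrincipalSeries_eq_self [DecidableEq F] (hψ : ψ ≠ 1)
    {f : intertwiningEigenspace ψ} (hf : ∀ g, halfPrincipalSeries ψ g f = f) : f = 0 := by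
  have hconst {v : Fin 2 → F} (hv : v ≠ 0) : f.1 v = f.1 ![1, 0] := by
    obtain ⟨g, rfl⟩ := exists_smul_eq hv
    have h : f.1 (g⁻¹ • g • ![1, 0]) = f.1 (g • ![1, 0]) :=
      congrFun (congrArg Subtype.val (hf g)) (g • ![1, 0])
    rw [← h, inv_smul_smul]
  have hzero : f.1 0 = 0 := by
    refine (mul_eq_zero_iff_left (sqrt_card_mul_ne_zero (F := F))).1 ?_
    simp [mul_apply_of_mem_eigenspace f.2, intertwiningMatrix_zero_left]
  have hone : f.1 ![1, 0] = 0 := by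
    refine (mul_eq_zero_iff_left (sqrt_card_mul_ne_zero (F := F))).1 ?_
    have hterm (v : Fin 2 → F) :
        intertwiningMatrix ψ ![1, 0] v * f.1 v = ψ (v 1) * f.1 ![1, 0] := by
      obtain rfl | hv := eq_or_ne v 0
      · simp [hzero, ψ.map_zero]
      · simp [hconst hv, intertwiningMatrix_apply]
    rw [mul_apply_of_mem_eigenspace f.2, Finset.sum_congr rfl fun v _ ↦ hterm v, sum_fin_two_fun,
      Finset.sum_comm]
    simp [← Finset.sum_mul, MulChar.sum_eq_zero_of_ne_one hψ]
  refine Subtype.ext (funext fun v ↦ ?_)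
  obtain rfl | hv := eq_or_ne v 0
  exacts [hzero, (hconst hv).trans hone]

lemma halfPrincipalSeries_ne_one [DecidableEq F] (hψ : ψ ≠ 1) (hquad : ψ ^ 2 = 1)
    (hneg : ψ (-1) = 1) : halfPrincipalSeries ψ ≠ 1 := fun h ↦ by
  have hpos := two_mul_finrank_eigenspace_intertwiningMatrix hψ hquad hneg
  have := finrank_pos_iff.1 (show 0 < finrank ℝ (intertwiningEigenspace ψ) by lia)
  obtain ⟨f, hf⟩ := exists_ne (0 : intertwiningEigenspace ψ)
  exact hf (eq_zero_of_halfPrincipalSeries_eq_self hψ fun g ↦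
    LinearMap.congr_fun (DFunLike.congr_fun h g) f)

lemma exists_quadratic_mulChar (h4 : Fintype.card F % 4 = 1) :
    ∃ ψ : MulChar F ℝ, ψ ≠ 1 ∧ ψ ^ 2 = 1 ∧ ψ (-1) = 1 := by
  classical
  have hchar : ringChar F ≠ 2 := fun h ↦ by
    have := FiniteField.even_card_of_char_two h
    lia
  refine ⟨(quadraticChar F).ringHomComp (Int.castRingHom ℝ),
    (MulChar.ringHomComp_ne_one_iff Int.cast_injective).2 (quadraticChar_ne_one hchar), ?_, ?_⟩
  · rw [MulChar.ringHomComp_pow, (quadraticChar_isQuadratic F).sq_eq_one, MulChar.ringHomComp_one]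
  · rw [MulChar.ringHomComp_apply, quadraticChar_neg_one hchar, ZMod.χ₄_nat_one_mod_four h4,
      map_one]

theorem exists_injective_of_card_mod_four_eq_one (hF : 4 ≤ Fintype.card F)
    (h4 : Fintype.card F % 4 = 1) :
    ∃ f : ProjectiveSpecialLinearGroup (Fin 2) F →* GL (Fin ((Fintype.card F + 1) / 2)) ℝ,
      Function.Injective f := by
  classical
  obtain ⟨ψ, hψ, hquad, hneg⟩ := exists_quadratic_mulChar h4
  have h := exists_injective_of_representation (Nat.card_eq_fintype_card (α := F) ▸ hF)
    (halfPrincipalSeries_neg_one hneg) (halfPrincipalSeries_ne_one hψ hquad hneg)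
  rwa [Nat.eq_div_of_mul_eq_right two_ne_zero
    (two_mul_finrank_eigenspace_intertwiningMatrix hψ hquad hneg)] at h

end PrincipalSeries

/-! ### The odd Weil representation -/

section Weil

open scoped MatrixGroups
open Module

lemma exists_comp_eq_of_forall_eq_one {G H M : Type*} [Group G] [Group H] [Monoid M] {f : G →* H}
    (hf : Function.Surjective f) {g : G →* M} (hg : ∀ x, f x = 1 → g x = 1) :
    ∃ k : H →* M, ∀ x, k (f x) = g x :=
  ⟨(QuotientGroup.lift f.ker g hg).comp (QuotientGroup.quotientKerEquivOfSurjective f hf).symm,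
    fun x ↦ congrArg (QuotientGroup.lift f.ker g hg)
      ((QuotientGroup.quotientKerEquivOfSurjective f hf).symm_apply_apply x)⟩

/-- The twist of a representation by a character with values in the units of the scalars. -/
def twistRepresentation {k G V : Type*} [CommRing k] [Monoid G] [AddCommGroup V] [Module k V]
    (χ : G →* kˣ) (ρ : Representation k G V) : Representation k G V where
  toFun g := (χ g : k) • ρ g
  map_one' := by simp
  map_mul' g h := by rw [map_mul, map_mul, Units.val_mul, smul_mul_smul_comm]

variable {F : Type*} [Field F]

/-- The Schrödinger model of the Heisenberg group: `heisenberg ψ v` translates functions on `F` by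
`v 0` and modulates them by the frequency `v 1`, with the phase making `SL₂(F)` act by
automorphisms without further scalars. -/
noncomputable def heisenberg (ψ : AddChar F ℂ) (v : Fin 2 → F) : End ℂ (F → ℂ) :=
  LinearMap.mulLeft ℂ (fun x ↦ ψ (v 1 * x + v 0 * v 1 / 2)) ∘ₗ LinearMap.funLeft ℂ ℂ (· + v 0)

variable (F) in
/-- The operator `f ↦ f ∘ (-·)` on functions on `F`. -/
def parity : End ℂ (F → ℂ) :=
  LinearMap.funLeft ℂ ℂ Neg.neg

variable {ψ : AddChar F ℂ}

lemma heisenberg_apply (v : Fin 2 → F) (f : F → ℂ) (x : F) :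
    heisenberg ψ v f x = ψ (v 1 * x + v 0 * v 1 / 2) * f (x + v 0) :=
  rfl

lemma parity_apply (f : F → ℂ) (x : F) : parity F f x = f (-x) :=
  rfl

lemma parity_mul_parity : parity F * parity F = 1 := by
  ext
  simp [parity_apply]

variable (ψ) in
/-- The group of pairs of `g : SL₂(F)` and a parity preserving operator intertwining the
Heisenberg operators with their transforms by `g`. By Schur's lemma it is an extension of `SL₂(F)`
by the scalars, of which the Weil representation is a splitting. -/
def metaplecticGroup : Subgroup (SL(2, F) × (End ℂ (F → ℂ))ˣ) where
  carrier := {m | (∀ v, SemiconjBy (m.2 : End ℂ (F → ℂ)) (heisenberg ψ v)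
    (heisenberg ψ (m.1 • v))) ∧ Commute (m.2 : End ℂ (F → ℂ)) (parity F)}
  one_mem' := ⟨fun v ↦ by simp, .one_left _⟩
  mul_mem' {m n} hm hn := ⟨fun v ↦ by
    rw [Prod.fst_mul, mul_smul]
    exact (hm.1 _).mul_left (hn.1 v), hm.2.mul_left hn.2⟩
  inv_mem' {m} hm := ⟨fun v ↦ by
    simpa using (hm.1 (m.1⁻¹ • v)).units_inv_symm_left, hm.2.units_inv_left⟩

variable (ψ) in
/-- The projection of the extension onto `SL₂(F)`. -/
def metaplecticProj : metaplecticGroup ψ →* SL(2, F) :=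
  (MonoidHom.fst _ _).comp (metaplecticGroup ψ).subtype

/-- The action of the extension on the functions of parity `ε = ±1`. -/
noncomputable def parityRepresentation (ψ : AddChar F ℂ) (ε : ℂ) :
    Representation ℂ (metaplecticGroup ψ) (End.eigenspace (parity F) ε) :=
  eigenRepresentation ((Units.coeHom _).comp
    ((MonoidHom.snd _ _).comp (metaplecticGroup ψ).subtype)) (fun m ↦ m.2.2.symm) ε

lemma coe_parityRepresentation {ε : ℂ} (m : metaplecticGroup ψ)
    (f : End.eigenspace (parity F) ε) :
    (parityRepresentation ψ ε m f : F → ℂ) = (m.1.2 : End ℂ (F → ℂ)) f :=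
  rfl

/-- The action on odd functions, twisted by a quotient of determinants so as to make the scalars
act trivially: there is one more even dimension than odd ones. -/
noncomputable def normalizedOddRepresentation (ψ : AddChar F ℂ) :
    Representation ℂ (metaplecticGroup ψ) (End.eigenspace (parity F) (-1)) :=
  twistRepresentation ((LinearMap.det.comp (parityRepresentation ψ (-1))).toHomUnits *
    (LinearMap.det.comp (parityRepresentation ψ 1)).toHomUnits⁻¹) (parityRepresentation ψ (-1))

lemma normalizedOddRepresentation_apply (m : metaplecticGroup ψ) :
    normalizedOddRepresentation ψ m = (LinearMap.det (parityRepresentation ψ (-1) m) *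
      (LinearMap.det (parityRepresentation ψ 1 m))⁻¹) • parityRepresentation ψ (-1) m := by
  simp [normalizedOddRepresentation, twistRepresentation]

lemma eq_smul_one_of_commute_heisenberg [Finite F] (hψ : ψ ≠ 1) {C : End ℂ (F → ℂ)}
    (hC : ∀ v, Commute C (heisenberg ψ v)) : ∃ c : ℂ, C = c • 1 := by
  classical
  have hcomm (v f) : C (heisenberg ψ v f) = heisenberg ψ v (C f) := LinearMap.congr_fun (hC v) f
  obtain ⟨b, hb⟩ := AddChar.ne_one_iff.1 hψ
  have hzero {x : F} (hx : x ≠ 0) : C (Pi.single 0 1) x = 0 := by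
    have hfix : heisenberg ψ ![0, b / x] (Pi.single 0 1) = Pi.single 0 1 := by
      ext y
      obtain rfl | hy := eq_or_ne y 0 <;> simp [heisenberg_apply, *]
    have h := congrFun (hcomm ![0, b / x] (Pi.single 0 1)) x
    simp only [hfix, heisenberg_apply, Matrix.cons_val, div_mul_cancel₀ _ hx, zero_mul, zero_div,
      add_zero] at h
    exact (mul_left_eq_self₀.1 h.symm).resolve_left hb
  refine ⟨C (Pi.single 0 1) 0, LinearMap.pi_ext' fun y ↦ LinearMap.ext_ring (funext fun x ↦ ?_)⟩
  have hshift : Pi.single y (1 : ℂ) = heisenberg ψ ![-y, 0] (Pi.single 0 1) := by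
    ext x
    simp [heisenberg_apply, Pi.single_apply, ← sub_eq_add_neg, sub_eq_zero]
  simp only [LinearMap.comp_apply, LinearMap.coe_single]
  rw [hshift, hcomm, LinearMap.smul_apply]
  obtain rfl | hxy := eq_or_ne x y
  · simp [heisenberg_apply]
  · simp [heisenberg_apply, hzero (sub_ne_zero.2 hxy), ← sub_eq_add_neg, sub_ne_zero.2 hxy]

variable (F) in
/-- The Weyl element of `SL₂(F)`, the operator attached to which is the Fourier transform. -/
def weyl : SL(2, F) :=
  ⟨!![0, 1; -1, 0], by simp⟩

lemma coe_weyl : (weyl F : Matrix (Fin 2) (Fin 2) F) = !![0, 1; -1, 0] :=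
  rfl

variable (F) in
/-- The parity operator as a unit; in the metaplectic group it lies over `-1`. -/
def parityUnit : (End ℂ (F → ℂ))ˣ :=
  ⟨parity F, parity F, parity_mul_parity, parity_mul_parity⟩

lemma parityUnit_mem : (-1, parityUnit F) ∈ metaplecticGroup ψ := by
  refine ⟨fun v ↦ LinearMap.ext fun f ↦ funext fun x ↦ ?_, .refl _⟩
  simp only [parityUnit, Module.End.mul_apply, parity_apply, heisenberg_apply]
  simp [Matrix.SpecialLinearGroup.smul_def, Matrix.neg_mulVec, add_comm]

/-- Multiplication by the quadratic exponential `x ↦ ψ (-c x² / 2)`. -/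
noncomputable def chirp (ψ : AddChar F ℂ) (c : F) : (End ℂ (F → ℂ))ˣ :=
  Units.map (Algebra.lmul ℂ (F → ℂ)).toMonoidHom
    ⟨fun x ↦ ψ (-c * x ^ 2 / 2), fun x ↦ ψ (c * x ^ 2 / 2),
      funext fun x ↦ by simp [← AddChar.map_add_eq_mul, neg_div],
      funext fun x ↦ by simp [← AddChar.map_add_eq_mul, neg_div]⟩

lemma chirp_apply (c : F) (f : F → ℂ) (x : F) :
    (chirp ψ c : End ℂ (F → ℂ)) f x = ψ (-c * x ^ 2 / 2) * f x :=
  rfl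

lemma chirp_mem (h2 : (2 : F) ≠ 0) (c : F) :
    (Matrix.SpecialLinearGroup.transvection one_ne_zero c, chirp ψ c) ∈ metaplecticGroup ψ := by
  refine ⟨fun v ↦ LinearMap.ext fun f ↦ funext fun x ↦ ?_, LinearMap.ext fun f ↦ funext fun x ↦ ?_⟩
  · have hv : (Matrix.SpecialLinearGroup.transvection one_ne_zero c : SL(2, F)) • v =
        ![v 0, v 1 + c * v 0] := by
      ext i
      fin_cases i <;> simp [Matrix.SpecialLinearGroup.smul_def,
        Matrix.SpecialLinearGroup.transvection_coe, Matrix.add_mulVec]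
    simp only [Module.End.mul_apply, chirp_apply, heisenberg_apply, hv, Matrix.cons_val,
      ← mul_assoc, ← AddChar.map_add_eq_mul]
    congr 2
    field_simp
    ring
  · simp only [Module.End.mul_apply, chirp_apply, parity_apply, neg_sq]

lemma unipotent_eq_weyl_conj (b : F) :
    unipotent b =
      weyl F * Matrix.SpecialLinearGroup.transvection one_ne_zero (-b) * (weyl F)⁻¹ := by
  rw [eq_mul_inv_iff_mul_eq]
  ext i j
  fin_cases i <;> fin_cases j <;>
    simp [Matrix.mul_apply, coe_weyl, Matrix.SpecialLinearGroup.transvection_coe,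
      Matrix.single_apply]

/-- The Fourier transform on functions on `F`. -/
noncomputable def fourier [Fintype F] [DecidableEq F] (ψ : AddChar F ℂ) : End ℂ (F → ℂ) :=
  Matrix.toLin' (.of fun x y ↦ ψ (x * y))

lemma fourier_apply [Fintype F] [DecidableEq F] (f : F → ℂ) (x : F) :
    fourier ψ f x = ∑ y, ψ (x * y) * f y :=
  rfl

lemma fourier_mul_fourier_inv [Fintype F] [DecidableEq F] (hψ : ψ ≠ 1) :
    fourier ψ * fourier ψ⁻¹ = (Fintype.card F : ℂ) • 1 := by
  rw [fourier, fourier, Module.End.mul_eq_comp, ← Matrix.toLin'_mul, Module.End.one_eq_id,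
    ← Matrix.toLin'_one, ← map_smul]
  congr 1
  ext x z
  have hterm (y : F) : ψ (x * y) * ψ⁻¹ (y * z) = ψ (y * (x - z)) := by
    rw [AddChar.inv_apply, ← AddChar.map_add_eq_mul]
    congr 1
    ring
  simp only [Matrix.mul_apply, Matrix.of_apply, hterm,
    AddChar.sum_mulShift _ (AddChar.IsPrimitive.of_ne_one hψ)]
  simp [Matrix.one_apply, sub_eq_zero]

lemma isUnit_fourier [Fintype F] [DecidableEq F] (hψ : ψ ≠ 1) : IsUnit (fourier ψ) := by
  have hcard : (Fintype.card F : ℂ) ≠ 0 := Nat.cast_ne_zero.2 Fintype.card_ne_zero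
  refine .of_mul_eq_one ((Fintype.card F : ℂ)⁻¹ • fourier ψ⁻¹) ?_
  rw [mul_smul_comm, fourier_mul_fourier_inv hψ, smul_smul, inv_mul_cancel₀ hcard, one_smul]

lemma exists_weyl_mem [Finite F] (h2 : (2 : F) ≠ 0) (hψ : ψ ≠ 1) :
    ∃ A, (weyl F, A) ∈ metaplecticGroup ψ := by
  classical
  have := Fintype.ofFinite F
  refine ⟨(isUnit_fourier hψ).unit, fun v ↦ ?_, ?_⟩ <;>
    refine LinearMap.ext fun f ↦ funext fun x ↦ ?_ <;>
    simp only [IsUnit.unit_spec, Module.End.mul_apply, parity_apply, heisenberg_apply,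
      fourier_apply]
  · have hv : weyl F • v = ![v 1, -v 0] := by
      ext i
      fin_cases i <;>
        simp [Matrix.SpecialLinearGroup.smul_def, coe_weyl, Matrix.mulVec, dotProduct]
    rw [hv, ← (Equiv.subRight (v 0)).sum_comp, Finset.mul_sum]
    refine Finset.sum_congr rfl fun y _ ↦ ?_
    simp only [Equiv.subRight_apply, sub_add_cancel, Matrix.cons_val, ← mul_assoc,
      ← AddChar.map_add_eq_mul]
    congr 2
    field_simp
    ring
  · exact Fintype.sum_equiv (Equiv.neg F) _ _ fun y ↦ by simp

lemma metaplecticProj_surjective [Finite F] (h2 : (2 : F) ≠ 0) (hψ : ψ ≠ 1) :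
    Function.Surjective (metaplecticProj ψ) := by
  have hlower (c : F) : Matrix.SpecialLinearGroup.transvection one_ne_zero c ∈
      (metaplecticProj ψ).range := ⟨⟨_, chirp_mem h2 c⟩, rfl⟩
  have hweyl : weyl F ∈ (metaplecticProj ψ).range :=
    (exists_weyl_mem h2 hψ).elim fun A hA ↦ ⟨⟨_, hA⟩, rfl⟩
  refine Matrix.SL2.transvection_induction (· ∈ (metaplecticProj ψ).range) (fun i j hij c ↦ ?_)
    fun _ _ ↦ mul_mem
  obtain ⟨rfl, rfl⟩ | ⟨rfl, rfl⟩ : i = 0 ∧ j = 1 ∨ i = 1 ∧ j = 0 := by lia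
  · change unipotent c ∈ (metaplecticProj ψ).range
    rw [unipotent_eq_weyl_conj]
    exact mul_mem (mul_mem hweyl (hlower (-c))) (inv_mem hweyl)
  · exact hlower c

lemma trace_parity [Finite F] (h2 : (2 : F) ≠ 0) : LinearMap.trace ℂ (F → ℂ) (parity F) = 1 := by
  classical
  have := Fintype.ofFinite F
  have hfix (x : F) : -x = x ↔ x = 0 := by
    rw [neg_eq_iff_add_eq_zero, ← two_mul, mul_eq_zero_iff_left h2]
  rw [LinearMap.trace_eq_matrix_trace ℂ (Pi.basisFun ℂ F)]
  simp [Matrix.trace, parity_apply, Pi.single_apply, hfix]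

lemma two_mul_finrank_eigenspace_parity [Fintype F] (h2 : (2 : F) ≠ 0) {ε : ℂ} (hε : ε ^ 2 = 1) :
    2 * (finrank ℂ (End.eigenspace (parity F) ε) : ℂ) = Fintype.card F + ε := by
  have hsq : parity F ^ 2 = 1 := (pow_two _).trans parity_mul_parity
  have hcube : parity F ^ 3 = ε ^ 2 • parity F := by rw [pow_succ, hsq, one_mul, hε, one_smul]
  have hne : ε ≠ 0 := fun h ↦ by simp [h] at hε
  simpa [hsq, hε, trace_parity h2] using finrank_eigenspace_of_pow_three hne hcube

lemma finrank_even_eq_finrank_odd_add_one [Finite F] (h2 : (2 : F) ≠ 0) :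
    finrank ℂ (End.eigenspace (parity F) 1) =
      finrank ℂ (End.eigenspace (parity F) (-1)) + 1 := by
  have := Fintype.ofFinite F
  have heven := two_mul_finrank_eigenspace_parity h2 (one_pow 2)
  have hodd := two_mul_finrank_eigenspace_parity h2 (neg_one_sq (R := ℂ))
  exact_mod_cast (by linear_combination (heven - hodd) / 2 :
    (finrank ℂ (End.eigenspace (parity F) 1) : ℂ) =
      finrank ℂ (End.eigenspace (parity F) (-1)) + 1)

lemma two_mul_finrank_odd_add_one [Fintype F] (h2 : (2 : F) ≠ 0) :
    2 * finrank ℂ (End.eigenspace (parity F) (-1)) + 1 = Fintype.card F := by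
  have hodd := two_mul_finrank_eigenspace_parity h2 (neg_one_sq (R := ℂ))
  exact_mod_cast (by linear_combination hodd :
    2 * (finrank ℂ (End.eigenspace (parity F) (-1)) : ℂ) + 1 = Fintype.card F)

lemma normalizedOddRepresentation_eq_one_of_proj_eq_one [Finite F] (h2 : (2 : F) ≠ 0) (hψ : ψ ≠ 1)
    {m : metaplecticGroup ψ} (hm : metaplecticProj ψ m = 1) :
    normalizedOddRepresentation ψ m = 1 := by
  obtain ⟨c, hc⟩ := eq_smul_one_of_commute_heisenberg hψ fun v ↦ by
    have h := m.2.1 v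
    rwa [show m.1.1 = 1 from hm, one_smul] at h
  have hc0 : c ≠ 0 := fun h ↦ m.1.2.ne_zero (by rw [hc, h, zero_smul])
  have hscalar (ε : ℂ) : parityRepresentation ψ ε m = c • 1 :=
    LinearMap.ext fun f ↦ Subtype.ext (LinearMap.congr_fun hc f.1)
  rw [normalizedOddRepresentation_apply, hscalar, hscalar, LinearMap.det_smul, LinearMap.det_smul,
    finrank_even_eq_finrank_odd_add_one h2, map_one, map_one, smul_smul, pow_succ, mul_one,
    mul_one]
  field_simp
  rw [one_smul]

lemma exists_oddWeilRepresentation [Finite F] (h2 : (2 : F) ≠ 0) (hψ : ψ ≠ 1) :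
    ∃ ρ : Representation ℂ SL(2, F) (End.eigenspace (parity F) (-1)),
      ∀ m, ρ (metaplecticProj ψ m) = normalizedOddRepresentation ψ m :=
  exists_comp_eq_of_forall_eq_one (metaplecticProj_surjective h2 hψ)
    fun _ ↦ normalizedOddRepresentation_eq_one_of_proj_eq_one h2 hψ

lemma normalizedOddRepresentation_parityUnit [Fintype F] (h2 : (2 : F) ≠ 0)
    (h4 : Fintype.card F % 4 = 3) :
    normalizedOddRepresentation ψ ⟨_, parityUnit_mem⟩ = 1 := by
  have hscalar (ε : ℂ) : parityRepresentation ψ ε ⟨_, parityUnit_mem⟩ = ε • 1 :=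
    LinearMap.ext fun f ↦ Subtype.ext (End.mem_eigenspace_iff.1 f.2)
  have hodd : Odd (finrank ℂ (End.eigenspace (parity F) (-1))) := by
    have := two_mul_finrank_odd_add_one h2
    exact Nat.odd_iff.2 (by lia)
  rw [normalizedOddRepresentation_apply, hscalar, hscalar, LinearMap.det_smul, LinearMap.det_smul,
    hodd.neg_one_pow]
  simp [smul_smul]

lemma exists_forall_mul_eq_one_of_normalizedOddRepresentation_chirp (h2 : (2 : F) ≠ 0) {c : F}
    (hc : normalizedOddRepresentation ψ ⟨_, chirp_mem h2 c⟩ = 1) :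
    ∃ s : ℂ, ∀ x ≠ 0, s * ψ (-c * x ^ 2 / 2) = 1 := by
  classical
  rw [normalizedOddRepresentation_apply] at hc
  refine ⟨LinearMap.det (parityRepresentation ψ (-1) ⟨_, chirp_mem h2 c⟩) *
    (LinearMap.det (parityRepresentation ψ 1 ⟨_, chirp_mem h2 c⟩))⁻¹, fun x hx ↦ ?_⟩
  have hne : x ≠ -x := fun h ↦ hx <| by
    rwa [eq_neg_iff_add_eq_zero, ← two_mul, mul_eq_zero_iff_left h2] at h
  have hodd : Pi.single x 1 - Pi.single (-x) 1 ∈ End.eigenspace (parity F) (-1) := by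
    refine End.mem_eigenspace_iff.2 (funext fun y ↦ ?_)
    simp [parity_apply, Pi.single_apply, neg_eq_iff_eq_neg]
  have h := congrFun (congrArg Subtype.val (LinearMap.congr_fun hc ⟨_, hodd⟩)) x
  simpa [coe_parityRepresentation, chirp_apply, hne] using h

lemma exists_normalizedOddRepresentation_chirp_ne_one [Fintype F] (h2 : (2 : F) ≠ 0) (hψ : ψ ≠ 1)
    (hF : 4 ≤ Fintype.card F) :
    ∃ c, normalizedOddRepresentation ψ ⟨_, chirp_mem h2 c⟩ ≠ 1 := by
  classical
  obtain ⟨x, hx⟩ : ∃ x, x ∉ ({0, 1, -1} : Finset F) := by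
    by_contra! h
    have := (Finset.eq_univ_of_forall h ▸ Finset.card_le_three : Finset.univ.card ≤ 3)
    exact (hF.trans this).not_gt (by simp)
  simp only [Finset.mem_insert, Finset.mem_singleton, not_or] at hx
  have hsq : x ^ 2 - 1 ≠ 0 := sub_ne_zero.2 fun h ↦ (sq_eq_one_iff.1 h).elim hx.2.1 hx.2.2
  obtain ⟨b, hb⟩ := AddChar.ne_one_iff.1 hψ
  refine ⟨2 * b / (x ^ 2 - 1), fun hc ↦ hb ?_⟩
  obtain ⟨s, hs⟩ := exists_forall_mul_eq_one_of_normalizedOddRepresentation_chirp h2 hc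
  have hs0 : s ≠ 0 := left_ne_zero_of_mul_eq_one (hs 1 one_ne_zero)
  have heq := mul_left_cancel₀ hs0 ((hs 1 one_ne_zero).trans (hs x hx.1).symm)
  have hsub : -(2 * b / (x ^ 2 - 1)) * 1 ^ 2 / 2 =
      b + -(2 * b / (x ^ 2 - 1)) * x ^ 2 / 2 := by
    field_simp
    ring
  rw [hsub, AddChar.map_add_eq_mul] at heq
  exact (mul_eq_right₀ (right_ne_zero_of_mul_eq_one (hs x hx.1))).1 heq

lemma exists_addChar_ne_one [Finite F] : ∃ ψ : AddChar F ℂ, ψ ≠ 1 := by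
  have := AddChar.FiniteField.primitiveChar_to_Complex_isPrimitive F
  exact ⟨_, by simpa using this one_ne_zero⟩

theorem exists_injective_of_card_mod_four_eq_three [Fintype F] (hF : 4 ≤ Fintype.card F)
    (h4 : Fintype.card F % 4 = 3) :
    ∃ f : ProjectiveSpecialLinearGroup (Fin 2) F →* GL (Fin (Fintype.card F - 1)) ℝ,
      Function.Injective f := by
  have h2 : (2 : F) ≠ 0 := Ring.two_ne_zero fun h ↦ by
    have := FiniteField.even_card_of_char_two h
    lia
  obtain ⟨ψ, hψ⟩ := exists_addChar_ne_one (F := F)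
  obtain ⟨ρ, hρ⟩ := exists_oddWeilRepresentation h2 hψ
  obtain ⟨c, hc⟩ := exists_normalizedOddRepresentation_chirp_ne_one h2 hψ hF
  have hneg : ρ (-1) = 1 := (hρ ⟨_, parityUnit_mem⟩).trans
    (normalizedOddRepresentation_parityUnit h2 h4)
  have hne : ρ ≠ 1 := fun h ↦ hc <| by rw [← hρ, h, MonoidHom.one_apply]
  have h := exists_injective_of_complex_representation (Nat.card_eq_fintype_card (α := F) ▸ hF)
    hneg hne
  rwa [Nat.eq_sub_of_add_eq (two_mul_finrank_odd_add_one h2)] at h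

end Weil

/-! ### Faithful actions of `PSL₂(p)` -/

section ProjectiveSpecialLinear

open Matrix.SpecialLinearGroup

variable {p n : ℕ} [Fact p.Prime]
  {ρ : ProjectiveSpecialLinearGroup (Fin 2) (ZMod p) →*
    Equiv.Perm (EuclideanSpace ℝ (Fin n))}

theorem dim_lower_bound (hinj : Function.Injective ρ) (hρ : ∀ g, ContDiff ℝ 1 (ρ g)) :
    (p % 4 = 3 → p - 1 ≤ n) ∧ (p % 4 = 1 → (p + 1) / 2 ≤ n) := by
  let π := QuotientGroup.mk' (Subgroup.center (Matrix.SpecialLinearGroup (Fin 2) (ZMod p)))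
  have hker (g) : (ρ.comp π) g = 1 ↔ g ∈ Subgroup.center _ := by
    rw [MonoidHom.comp_apply, map_eq_one_iff ρ hinj, QuotientGroup.mk'_apply,
      QuotientGroup.eq_one_iff]
  have hunip : (ρ.comp π) (unipotent 1) ≠ 1 := by
    rw [Ne, hker, transvection_mem_center_iff]
    exact one_ne_zero
  have hneg : (ρ.comp π) (-1) = 1 :=
    (hker _).2 (Subgroup.mem_center_iff.2 fun g ↦ by rw [mul_neg_one, neg_one_mul])
  exact ⟨fun h3 ↦ sub_one_le_dim_of_mod_four_eq_three (fun g ↦ hρ (π g)) h3 hunip,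
    fun h1 ↦ half_add_one_le_dim_of_mod_four_eq_one (fun g ↦ hρ (π g)) h1 hunip hneg⟩

end ProjectiveSpecialLinear

end PSLAction

theorem minimal_euclidean_action_PSL_general (p : ℕ) (hp : p.Prime) (hp3 : 3 < p) :
    (∀ (n : ℕ) (ρ : Matrix.ProjectiveSpecialLinearGroup (Fin 2) (ZMod p) →*
        Equiv.Perm (EuclideanSpace ℝ (Fin n))),
      Function.Injective ρ → (∀ g, ContDiff ℝ 1 (ρ g)) →
        (p % 4 = 3 → p - 1 ≤ n) ∧ (p % 4 = 1 → (p + 1) / 2 ≤ n)) ∧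
    (p % 4 = 3 → ∃ f : Matrix.ProjectiveSpecialLinearGroup (Fin 2) (ZMod p) →*
        Matrix.GeneralLinearGroup (Fin (p - 1)) ℝ, Function.Injective f) ∧
    (p % 4 = 1 → ∃ f : Matrix.ProjectiveSpecialLinearGroup (Fin 2) (ZMod p) →*
        Matrix.GeneralLinearGroup (Fin ((p + 1) / 2)) ℝ, Function.Injective f) := by
  have : Fact p.Prime := ⟨hp⟩
  have hcard : Fintype.card (ZMod p) = p := ZMod.card p
  refine ⟨fun n ρ hinj hρ ↦ PSLAction.dim_lower_bound hinj hρ, fun h3 ↦ ?_, fun h1 ↦ ?_⟩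
  · have h := PSLAction.exists_injective_of_card_mod_four_eq_three (F := ZMod p)
      (hcard.symm ▸ hp3) (hcard.symm ▸ h3)
    rwa [hcard] at h
  · have h := PSLAction.exists_injective_of_card_mod_four_eq_one (F := ZMod p)
      (hcard.symm ▸ hp3) (hcard.symm ▸ h1)
    rwa [hcard] at h

/-- For an odd prime `p > 3`: if `PSL(2, p)` acts faithfully by diffeomorphisms on `ℝⁿ`,
then `n ≥ p - 1` when `p ≡ 3 (mod 4)` and `n ≥ (p + 1)/2` when `p ≡ 1 (mod 4)`; these
bounds are sharp, being realized by faithful linear actions on `ℝ^{p-1}`, respectively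
`ℝ^{(p+1)/2}`. -/
theorem minimal_euclidean_action_PSL (p : ℕ) (hp : p.Prime) (hpodd : Odd p) (hp3 : 3 < p) :
    (∀ (n : ℕ) (ρ : Matrix.ProjectiveSpecialLinearGroup (Fin 2) (ZMod p) →*
        Equiv.Perm (EuclideanSpace ℝ (Fin n))),
      Function.Injective ρ → (∀ g, ContDiff ℝ (⊤ : ℕ∞) (ρ g)) →
        (p % 4 = 3 → p - 1 ≤ n) ∧ (p % 4 = 1 → (p + 1) / 2 ≤ n)) ∧
    (p % 4 = 3 → ∃ f : Matrix.ProjectiveSpecialLinearGroup (Fin 2) (ZMod p) →*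
        Matrix.GeneralLinearGroup (Fin (p - 1)) ℝ, Function.Injective f) ∧
    (p % 4 = 1 → ∃ f : Matrix.ProjectiveSpecialLinearGroup (Fin 2) (ZMod p) →*
        Matrix.GeneralLinearGroup (Fin ((p + 1) / 2)) ℝ, Function.Injective f) := by
  obtain ⟨hlow, hsharp⟩ := minimal_euclidean_action_PSL_general p hp hp3
  exact ⟨fun n ρ hinj hρ ↦ hlow n ρ hinj fun g ↦ (hρ g).of_le (mod_cast le_top), hsharp⟩
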